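/- (Blow-up Lemma) There exists a constant c_p > 0 depending only on p such that if the initial curvature satisfies ψ̂(0) ≥ c_p·‖ψ‖₂, then there exist constants c, c' > 0 such that c/(T−t) ≤ k̂(0,t)^{p+1} ≤ c'/(T−t) for all t ∈ [0,T). -/

import Mathlib

open Real MeasureTheory Filter Set

/-- The `n`-th Fourier coefficient of a `2π`-periodic function `f : ℝ → ℝ`:
`f̂(n) = (1/2π) ∫₀^{2π} f(θ) e^{-inθ} dθ`. -/
noncomputable def fCoeff (f : ℝ → ℝ) (n : ℤ) : ℂ :=
  (1 / (2 * Real.pi)) * ∫ θ in (0:ℝ)..(2 * Real.pi),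
    (f θ : ℂ) * Complex.exp (-(Complex.I * n * θ))

/-- The seminorm `‖f‖₂ = max{sup_n n²|Re f̂(n)|, sup_n n²|Im f̂(n)|}`. -/
noncomputable def seminorm2 (f : ℝ → ℝ) : ℝ :=
  max (⨆ n : ℤ, (n : ℝ)^2 * |(fCoeff f n).re|)
      (⨆ n : ℤ, (n : ℝ)^2 * |(fCoeff f n).im|)

/-- The `C^l[0,2π]` norm: `max_{0 ≤ j ≤ l} sup_{θ ∈ [0,2π]} |f^{(j)}(θ)|`. -/
noncomputable def ClNorm (l : ℕ) (f : ℝ → ℝ) : ℝ :=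
  ⨆ j : Fin (l + 1), ⨆ θ : Set.Icc (0:ℝ) (2 * Real.pi),
    |iteratedDeriv (j : ℕ) f (θ : ℝ)|

/-- `k : ℝ × [0,T) → ℝ` is a smooth, `2π`-periodic (in space), strictly positive solution of the
`p`-curve shortening equation
`∂k/∂t = k²(k^{p-1} ∂²k/∂θ² + (p-1) k^{p-2} (∂k/∂θ)² + (1/p) k^p)`
with initial datum `ψ` (smooth, strictly positive, `2π`-periodic), blow-up time `T`
(i.e. `sup_θ k(θ,t) → ∞` as `t → T⁻`), such that `k(·,t)` is the curvature of a simple closed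
convex curve for each `t`, i.e. `∫₀^{2π} e^{iθ}/k(θ,t) dθ = 0`. -/
def IsPCSF (p : ℕ) (T : ℝ) (k : ℝ → ℝ → ℝ) (ψ : ℝ → ℝ) : Prop :=
  ContDiffOn ℝ (⊤ : ℕ∞) (fun q : ℝ × ℝ => k q.1 q.2) (Set.univ ×ˢ Set.Ico 0 T) ∧
  (∀ θ t, k (θ + 2 * Real.pi) t = k θ t) ∧
  (∀ θ : ℝ, ∀ t ∈ Set.Ico (0:ℝ) T, 0 < k θ t) ∧
  (∀ θ : ℝ, ∀ t ∈ Set.Ico (0:ℝ) T,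
    HasDerivAt (fun s => k θ s)
      ((k θ t)^2 * ((k θ t)^(p - 1) * deriv (deriv (fun x => k x t)) θ
        + ((p : ℝ) - 1) * (k θ t)^(p - 2) * (deriv (fun x => k x t) θ)^2
        + (1 / (p : ℝ)) * (k θ t)^p)) t) ∧
  (∀ θ, k θ 0 = ψ θ) ∧
  ContDiff ℝ (⊤ : ℕ∞) ψ ∧ (∀ θ, 0 < ψ θ) ∧ (∀ θ, ψ (θ + 2 * Real.pi) = ψ θ) ∧
  Filter.Tendsto (fun t => ⨆ θ : Set.Icc (0:ℝ) (2 * Real.pi), k (θ : ℝ) t)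
    (nhdsWithin T (Set.Iio T)) Filter.atTop ∧
  (∀ t ∈ Set.Ico (0:ℝ) T,
    (∫ θ in (0:ℝ)..(2 * Real.pi), Complex.exp (Complex.I * θ) / (k θ t)) = 0)

/-- The original time `t` corresponding to the rescaled time `τ`:
`t = T(1 - e^{-(p+1)τ})`, i.e. `τ = -(1/(p+1))·log(1 - t/T)`. -/
noncomputable def tOf (p : ℕ) (T τ : ℝ) : ℝ := T * (1 - Real.exp (-((p : ℝ) + 1) * τ))

/-- The normalized curvature `k̃(θ,τ) = ((p+1)/p)^{1/(p+1)} (T-t)^{1/(p+1)} k(θ,t)`,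
with `t = T(1 - e^{-(p+1)τ})`. -/
noncomputable def ktilde (p : ℕ) (T : ℝ) (k : ℝ → ℝ → ℝ) (θ τ : ℝ) : ℝ :=
  (((p : ℝ) + 1) / (p : ℝ)) ^ ((1 : ℝ) / ((p : ℝ) + 1))
    * (T - tOf p T τ) ^ ((1 : ℝ) / ((p : ℝ) + 1)) * k θ (tOf p T τ)

/-!
With `ρ = 1/k` the radius of curvature, `R` its mean and `A` the enclosed area divided by `π`, the
hypothesis on `ψ` makes the relative isoperimetric deficit `(R² - A)/R²` tiny at time `0`. Along the
flow `R' = -(1/p) M(kᵖ)` and `A' = -(2/p) M(kᵖ⁻¹)`, where `M` is the mean over the circle. For an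
almost round convex curve Gage's inequality `R ≤ A · M(k)` can be proved directly, and together with
Chebyshev's inequality `M(k) M(kᵖ⁻¹) ≤ M(kᵖ)` it shows that `A / R²` is nondecreasing, so the curve
stays almost round up to time `T`.

The energy `M(V² - V_θ²)` of the speed `V = kᵖ` is nondecreasing as well. Hence, once
`sup k` is large, `V` cannot drop quickly away from its maximum, and almost-roundness forces
`sup k · R ≤ 4`. So `k R` stays bounded, blow-up gives `R → 0`, and `(Rᵖ⁺¹)'` lies between two
negative constants. Integrating from `T` gives `Rᵖ⁺¹ ≍ T - t`, while `1 ≤ R · M(k) ≤ sup (k R)`.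
-/

/-! ### Means over the circle -/

/-- The mean of a function over one period `[0, 2π]`. For a `2π`-periodic function this is its
zeroth Fourier coefficient. -/
noncomputable def circleMean (f : ℝ → ℝ) : ℝ := (∫ θ in (0 : ℝ)..2 * π, f θ) / (2 * π)

section CircleMean

variable {f g : ℝ → ℝ}

lemma circleMean_const (c : ℝ) : circleMean (fun _ => c) = c := by
  simp [circleMean, pi_ne_zero]

lemma circleMean_const_mul (c : ℝ) (f : ℝ → ℝ) :
    circleMean (fun x => c * f x) = c * circleMean f := by
  rw [circleMean, circleMean, intervalIntegral.integral_const_mul, mul_div_assoc]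

lemma circleMean_add (hf : Continuous f) (hg : Continuous g) :
    circleMean (fun x => f x + g x) = circleMean f + circleMean g := by
  rw [circleMean, intervalIntegral.integral_add (hf.intervalIntegrable _ _)
    (hg.intervalIntegrable _ _), add_div, circleMean, circleMean]

lemma circleMean_sub (hf : Continuous f) (hg : Continuous g) :
    circleMean (fun x => f x - g x) = circleMean f - circleMean g := by
  rw [circleMean, intervalIntegral.integral_sub (hf.intervalIntegrable _ _)
    (hg.intervalIntegrable _ _), sub_div, circleMean, circleMean]

lemma circleMean_mono (hf : Continuous f) (hg : Continuous g)
    (h : ∀ x ∈ Icc 0 (2 * π), f x ≤ g x) : circleMean f ≤ circleMean g :=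
  div_le_div_of_nonneg_right (intervalIntegral.integral_mono_on two_pi_pos.le
    (hf.intervalIntegrable _ _) (hg.intervalIntegrable _ _) h) two_pi_pos.le

lemma circleMean_le_of_le {c : ℝ} (hf : Continuous f) (h : ∀ x ∈ Icc 0 (2 * π), f x ≤ c) :
    circleMean f ≤ c :=
  (circleMean_mono hf continuous_const h).trans_eq (circleMean_const c)

lemma le_circleMean_of_le {c : ℝ} (hf : Continuous f) (h : ∀ x ∈ Icc 0 (2 * π), c ≤ f x) :
    c ≤ circleMean f :=
  (circleMean_const c).symm.trans_le (circleMean_mono continuous_const hf h)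

lemma circleMean_nonneg (h : ∀ x, 0 ≤ f x) : 0 ≤ circleMean f :=
  div_nonneg (intervalIntegral.integral_nonneg two_pi_pos.le fun x _ => h x) two_pi_pos.le

lemma circleMean_pos (hf : Continuous f) (h : ∀ x, 0 < f x) : 0 < circleMean f :=
  div_pos (intervalIntegral.intervalIntegral_pos_of_pos_on (hf.intervalIntegrable _ _)
    (fun x _ => h x) two_pi_pos) two_pi_pos

lemma exists_eq_circleMean (hf : Continuous f) : ∃ z ∈ Icc 0 (2 * π), f z = circleMean f := by
  obtain ⟨z, hz, h⟩ := exists_eq_interval_average two_pi_pos.ne hf.continuousOn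
  rw [interval_average_eq_div, sub_zero] at h
  rw [uIoo_of_le two_pi_pos.le] at hz
  exact ⟨z, Ioo_subset_Icc_self hz, h⟩

lemma circleMean_deriv_eq_zero {f' : ℝ → ℝ} (hf : ∀ x, HasDerivAt f (f' x) x)
    (hf' : Continuous f') (hper : f 0 = f (2 * π)) : circleMean f' = 0 := by
  rw [circleMean, intervalIntegral.integral_eq_sub_of_hasDerivAt (fun x _ => hf x)
    (hf'.intervalIntegrable _ _), hper, sub_self, zero_div]

lemma circleMean_mul_deriv {f' g' : ℝ → ℝ} (hf : ∀ x, HasDerivAt f (f' x) x)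
    (hg : ∀ x, HasDerivAt g (g' x) x) (hf' : Continuous f') (hg' : Continuous g')
    (hfper : f 0 = f (2 * π)) (hgper : g 0 = g (2 * π)) :
    circleMean (fun x => f x * g' x) = -circleMean (fun x => f' x * g x) := by
  rw [circleMean, intervalIntegral.integral_mul_deriv_eq_deriv_mul (fun x _ => hf x)
    (fun x _ => hg x) (hf'.intervalIntegrable _ _) (hg'.intervalIntegrable _ _), hfper, hgper,
    sub_self, zero_sub, neg_div, circleMean]

lemma sq_integral_le (hf : Continuous f) {a b : ℝ} (hab : a ≤ b) :
    (∫ x in a..b, f x) ^ 2 ≤ (b - a) * ∫ x in a..b, f x ^ 2 := by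
  rcases hab.eq_or_lt with rfl | hlt
  · simp
  have hlen : 0 < b - a := sub_pos.2 hlt
  set m := (∫ x in a..b, f x) / (b - a) with hm
  have hint : ∫ x in a..b, f x = m * (b - a) := by rw [hm, div_mul_cancel₀ _ hlen.ne']
  have hvar : 0 ≤ ∫ x in a..b, (f x - m) ^ 2 :=
    intervalIntegral.integral_nonneg hab fun x _ => sq_nonneg _
  have hexp : ∫ x in a..b, (f x - m) ^ 2 = (∫ x in a..b, f x ^ 2) - m ^ 2 * (b - a) := by
    have hsq : ∀ x, (f x - m) ^ 2 = f x ^ 2 - 2 * m * f x + m ^ 2 := fun x => by ring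
    simp_rw [hsq]
    rw [intervalIntegral.integral_add, intervalIntegral.integral_sub,
      intervalIntegral.integral_const_mul, intervalIntegral.integral_const, smul_eq_mul, hint]
    · ring
    all_goals exact Continuous.intervalIntegrable (by fun_prop) _ _
  rw [hint]
  nlinarith

lemma sq_sub_le_circleMean_sq_deriv {f' : ℝ → ℝ} (hf : ∀ x, HasDerivAt f (f' x) x)
    (hf' : Continuous f') {x z : ℝ} (hx : x ∈ Icc 0 (2 * π)) (hz : z ∈ Icc 0 (2 * π)) :
    (f x - f z) ^ 2 ≤ |x - z| * (2 * π * circleMean (fun y => f' y ^ 2)) := by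
  wlog h : z ≤ x generalizing x z with H
  · rw [abs_sub_comm, ← neg_sub, neg_sq]
    exact H hz hx (le_of_not_ge h)
  have hftc : f x - f z = ∫ y in z..x, f' y :=
    (intervalIntegral.integral_eq_sub_of_hasDerivAt (fun x _ => hf x)
      (hf'.intervalIntegrable _ _)).symm
  rw [hftc, abs_of_nonneg (sub_nonneg.2 h), circleMean, mul_div_cancel₀ _ two_pi_pos.ne']
  refine (sq_integral_le hf' h).trans (mul_le_mul_of_nonneg_left ?_ (sub_nonneg.2 h))
  exact intervalIntegral.integral_mono_interval hz.1 h hx.2 (ae_of_all _ fun x => sq_nonneg _)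
    (Continuous.intervalIntegrable (by fun_prop) _ _)

lemma circleMean_mul_circleMean_pow_le (hf : Continuous f) (hpos : ∀ x, 0 < f x) (j : ℕ) :
    circleMean f * circleMean (fun x => f x ^ j) ≤ circleMean (fun x => f x ^ (j + 1)) := by
  set m := circleMean f with hm
  have hmpos : 0 < m := circleMean_pos hf hpos
  have hcorr : 0 ≤ circleMean (fun x => (f x - m) * (f x ^ j - m ^ j)) := by
    refine circleMean_nonneg fun x => ?_
    rcases le_total (f x) m with h | h
    · exact mul_nonneg_of_nonpos_of_nonpos (sub_nonpos.2 h)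
        (sub_nonpos.2 (pow_le_pow_left₀ (hpos x).le h j))
    · exact mul_nonneg (sub_nonneg.2 h) (sub_nonneg.2 (pow_le_pow_left₀ hmpos.le h j))
  have hexp : (fun x => (f x - m) * (f x ^ j - m ^ j)) =
      fun x => f x ^ (j + 1) - m * f x ^ j - m ^ j * f x + m ^ j * m := by
    ext x; ring
  rw [hexp] at hcorr
  simp (disch := fun_prop) only [circleMean_add, circleMean_sub, circleMean_const_mul,
    circleMean_const, ← hm] at hcorr
  linarith

lemma circleMean_pow_le (hf : Continuous f) (hpos : ∀ x, 0 < f x) (j : ℕ) :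
    circleMean f ^ j ≤ circleMean (fun x => f x ^ j) := by
  induction j with
  | zero => simp [circleMean_const]
  | succ j ih =>
    rw [pow_succ']
    exact (mul_le_mul_of_nonneg_left ih (circleMean_pos hf hpos).le).trans
      (circleMean_mul_circleMean_pow_le hf hpos j)

lemma one_le_circleMean_mul_circleMean_inv (hf : Continuous f) (hpos : ∀ x, 0 < f x) :
    1 ≤ circleMean f * circleMean (fun x => (f x)⁻¹) := by
  have hinv : Continuous fun x => (f x)⁻¹ := hf.inv₀ fun x => (hpos x).ne'
  set m := circleMean (fun x => (f x)⁻¹) with hm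
  have hmpos : 0 < m := circleMean_pos hinv fun x => inv_pos.2 (hpos x)
  have hsq : 0 ≤ circleMean (fun x => (f x)⁻¹ * (1 - m * f x) ^ 2) :=
    circleMean_nonneg fun x => mul_nonneg (inv_pos.2 (hpos x)).le (sq_nonneg _)
  have hexp : (fun x => (f x)⁻¹ * (1 - m * f x) ^ 2) =
      fun x => (f x)⁻¹ - 2 * m + m ^ 2 * f x := by
    ext x
    have := (hpos x).ne'
    field_simp
    ring
  rw [hexp] at hsq
  simp (disch := fun_prop) only [circleMean_add, circleMean_sub, circleMean_const_mul,
    circleMean_const, ← hm] at hsq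
  nlinarith

end CircleMean

/-! ### Fourier coefficients -/

section Fourier

variable {f f' : ℝ → ℝ}

/-- The period is a variable because Mathlib's `fourierCoeffOn` on `[0, 2π]` uses `2π - 0`. -/
lemma fourier_coe_eq_exp {T : ℝ} (hT : T = 2 * π) (n : ℤ) (x : ℝ) :
    fourier n (x : AddCircle T) = Complex.exp (Complex.I * n * x) := by
  have hpi : (π : ℂ) ≠ 0 := mod_cast pi_ne_zero
  rw [fourier_coe_apply, hT]
  congr 1
  push_cast
  field_simp

lemma fCoeff_eq_fourierCoeffOn (f : ℝ → ℝ) (n : ℤ) :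
    fCoeff f n = fourierCoeffOn two_pi_pos (fun x => (f x : ℂ)) n := by
  rw [fourierCoeffOn_eq_integral, fCoeff, Complex.real_smul]
  simp_rw [fourier_coe_eq_exp (sub_zero (2 * π)), smul_eq_mul, mul_comm (f _ : ℂ)]
  simp

lemma fCoeff_eq_circleMean (hf : Continuous f) (n : ℤ) :
    fCoeff f n = (circleMean (fun x => f x * cos (n * x)) : ℂ)
      - Complex.I * (circleMean (fun x => f x * sin (n * x)) : ℂ) := by
  have hexp : ∀ x : ℝ, (f x : ℂ) * Complex.exp (-(Complex.I * n * x))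
      = ((f x * cos (n * x) : ℝ) : ℂ) - Complex.I * ((f x * sin (n * x) : ℝ) : ℂ) := by
    intro x
    have harg : -(Complex.I * n * x) = ((-(n * x) : ℝ) : ℂ) * Complex.I := by push_cast; ring
    rw [harg, Complex.exp_mul_I, ← Complex.ofReal_cos, ← Complex.ofReal_sin, cos_neg, sin_neg]
    push_cast
    ring
  simp_rw [fCoeff, hexp]
  rw [intervalIntegral.integral_sub, intervalIntegral.integral_const_mul,
    intervalIntegral.integral_ofReal, intervalIntegral.integral_ofReal, circleMean, circleMean]
  · push_cast
    ring
  all_goals exact Continuous.intervalIntegrable (by fun_prop) _ _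

lemma fCoeff_zero (hf : Continuous f) : fCoeff f 0 = circleMean f := by
  simpa [circleMean_const] using fCoeff_eq_circleMean hf 0

lemma norm_exp_I_mul_intCast_mul (n : ℤ) (x : ℝ) : ‖Complex.exp (Complex.I * n * x)‖ = 1 := by
  have harg : Complex.I * n * x = ((n * x : ℝ) : ℂ) * Complex.I := by push_cast; ring
  rw [harg, Complex.norm_exp_ofReal_mul_I]

lemma norm_fCoeff_le (hf : Continuous f) (n : ℤ) :
    ‖fCoeff f n‖ ≤ circleMean (fun x => |f x|) := by
  have hnorm : ∀ x : ℝ, ‖(f x : ℂ) * Complex.exp (-(Complex.I * n * x))‖ = |f x| := by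
    intro x
    rw [norm_mul, Complex.exp_neg, norm_inv, norm_exp_I_mul_intCast_mul, inv_one, mul_one,
      Complex.norm_real, norm_eq_abs]
  have hint := intervalIntegral.norm_integral_le_of_norm_le (μ := volume) two_pi_pos.le
    (ae_of_all _ fun x _ => (hnorm x).le) (hf.abs.intervalIntegrable 0 (2 * π))
  have hscale : ‖(1 / (2 * π) : ℂ)‖ = (2 * π)⁻¹ := by simp [abs_of_pos pi_pos]
  rw [fCoeff, norm_mul, hscale, circleMean, div_eq_inv_mul]
  exact mul_le_mul_of_nonneg_left hint (inv_pos.2 two_pi_pos).le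

lemma norm_fCoeff_deriv (hf : ∀ x, HasDerivAt f (f' x) x) (hf' : Continuous f')
    (hper : f 0 = f (2 * π)) (n : ℤ) : ‖fCoeff f' n‖ = |(n : ℝ)| * ‖fCoeff f n‖ := by
  rcases eq_or_ne n 0 with rfl | hn
  · simp [fCoeff_zero hf', circleMean_deriv_eq_zero hf hf' hper]
  have hparts := fourierCoeffOn_of_hasDerivAt two_pi_pos (f := fun x => (f x : ℂ))
    (f' := fun x => (f' x : ℂ)) hn (fun x _ => (hf x).ofReal_comp)
    (Continuous.intervalIntegrable (by fun_prop) _ _)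
  rw [← hper, sub_self, mul_zero, zero_sub, ← fCoeff_eq_fourierCoeffOn,
    ← fCoeff_eq_fourierCoeffOn] at hparts
  have hn' : |(n : ℝ)| ≠ 0 := by positivity
  rw [hparts]
  simp only [norm_mul, norm_neg, norm_div, norm_one, Complex.norm_real, Complex.norm_I,
    Complex.norm_intCast, Complex.norm_ofNat, norm_eq_abs, abs_of_pos pi_pos,
    ← Complex.ofReal_sub, sub_zero, abs_two]
  field_simp

lemma hasSum_sq_norm_fCoeff (hf : Continuous f) :
    HasSum (fun n => ‖fCoeff f n‖ ^ 2) (circleMean (fun x => f x ^ 2)) := by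
  obtain ⟨C, hC⟩ := isCompact_Icc.exists_bound_of_continuousOn (s := Icc 0 (2 * π))
    (f := fun x => (f x : ℂ)) (by fun_prop)
  have hmem : MemLp (fun x => (f x : ℂ)) 2 (volume.restrict (Ioc 0 (2 * π))) :=
    MemLp.of_bound (Continuous.aestronglyMeasurable (by fun_prop)) C
      ((ae_restrict_iff' measurableSet_Ioc).2
        (ae_of_all _ fun x hx => hC x (Ioc_subset_Icc_self hx)))
  have h := hasSum_sq_fourierCoeffOn two_pi_pos hmem
  simpa only [← fCoeff_eq_fourierCoeffOn, Complex.norm_real, norm_eq_abs, sq_abs, sub_zero,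
    smul_eq_mul, circleMean, div_eq_inv_mul] using h

lemma four_mul_circleMean_sq_le_circleMean_sq_deriv (hf : ∀ x, HasDerivAt f (f' x) x)
    (hf' : Continuous f') (hper : f 0 = f (2 * π)) (hone : circleMean f = 0)
    (hcos : circleMean (fun x => f x * cos x) = 0)
    (hsin : circleMean (fun x => f x * sin x) = 0) :
    4 * circleMean (fun x => f x ^ 2) ≤ circleMean (fun x => f' x ^ 2) := by
  have hfc : Continuous f := continuous_iff_continuousAt.2 fun x => (hf x).continuousAt
  refine hasSum_le (fun n => ?_) ((hasSum_sq_norm_fCoeff hfc).mul_left 4)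
    (hasSum_sq_norm_fCoeff hf')
  rw [norm_fCoeff_deriv hf hf' hper, mul_pow]
  by_cases hn : n = 0 ∨ n = 1 ∨ n = -1
  · have hzero : fCoeff f n = 0 := by
      rw [fCoeff_eq_circleMean hfc]
      rcases hn with rfl | rfl | rfl
      · simp [hone, circleMean_const]
      · simp [hcos, hsin]
      · have hsin' : circleMean (fun x => -(f x * sin x)) = 0 := by
          simpa [hsin] using circleMean_const_mul (-1) fun x => f x * sin x
        simp [hcos, hsin']
    simp [hzero]
  · have hn2 : 2 ≤ |(n : ℝ)| := by
      have : 2 ≤ |n| := by rcases abs_cases n with h | h <;> omega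
      exact_mod_cast this
    exact mul_le_mul_of_nonneg_right (by nlinarith) (sq_nonneg _)

lemma hasSum_fCoeff_mul_exp (hf : Continuous f) (hper : Function.Periodic f (2 * π))
    (hsum : Summable (fCoeff f)) (x : ℝ) :
    HasSum (fun n => fCoeff f n * Complex.exp (Complex.I * n * x)) (f x) := by
  have : Fact (0 < 2 * π) := ⟨two_pi_pos⟩
  have hper' : Function.Periodic (fun x => (f x : ℂ)) (2 * π) := fun x => by simp [hper x]
  let F : C(AddCircle (2 * π), ℂ) :=
    ⟨hper'.lift, continuous_coinduced_dom.2 (Complex.continuous_ofReal.comp hf)⟩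
  have hF : ∀ y : ℝ, F (y : AddCircle (2 * π)) = f y := fun y => hper'.lift_coe y
  have hcoeff : fourierCoeff F = fCoeff f := by
    ext n
    rw [fourierCoeff_eq_intervalIntegral _ _ 0, fCoeff, zero_add, Complex.real_smul]
    simp_rw [hF, fourier_coe_eq_exp rfl, smul_eq_mul, mul_comm (f _ : ℂ)]
    simp
  have h := has_pointwise_sum_fourier_series_of_summable (f := F) (hcoeff ▸ hsum) x
  simpa only [hcoeff, hF, fourier_coe_eq_exp rfl, smul_eq_mul] using h

end Fourier

section Seminorm

lemma seminorm2_nonneg (f : ℝ → ℝ) : 0 ≤ seminorm2 f :=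
  le_max_of_le_left (Real.iSup_nonneg fun n => by positivity)

lemma periodic_deriv {f : ℝ → ℝ} {c : ℝ} (hf : Function.Periodic f c) :
    Function.Periodic (deriv f) c := fun x => by
  rw [← deriv_comp_add_const, funext hf]

variable {f : ℝ → ℝ}

lemma sq_mul_norm_fCoeff_le_circleMean (hf : ContDiff ℝ 2 f)
    (hper : Function.Periodic f (2 * π)) (n : ℤ) :
    (n : ℝ) ^ 2 * ‖fCoeff f n‖ ≤ circleMean (fun x => |deriv (deriv f) x|) := by
  have hf' : ContDiff ℝ 1 (deriv f) := hf.deriv' (n := 1)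
  have hf'' : Continuous (deriv (deriv f)) := hf'.continuous_deriv le_rfl
  have hcoeff := norm_fCoeff_deriv
    (fun x => (hf.differentiable two_ne_zero).differentiableAt.hasDerivAt) hf'.continuous
    (by simpa using (hper 0).symm) n
  have hcoeff' := norm_fCoeff_deriv
    (fun x => (hf'.differentiable one_ne_zero).differentiableAt.hasDerivAt) hf''
    (by simpa using (periodic_deriv hper 0).symm) n
  rw [← sq_abs, sq, mul_assoc, ← hcoeff, ← hcoeff']
  exact norm_fCoeff_le hf'' n

lemma sq_mul_norm_fCoeff_le (hf : ContDiff ℝ 2 f) (hper : Function.Periodic f (2 * π))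
    (n : ℤ) : (n : ℝ) ^ 2 * ‖fCoeff f n‖ ≤ 2 * seminorm2 f := by
  have hbound : ∀ part : ℂ → ℝ, (∀ z, |part z| ≤ ‖z‖) →
      (n : ℝ) ^ 2 * |part (fCoeff f n)| ≤ ⨆ m : ℤ, (m : ℝ) ^ 2 * |part (fCoeff f m)| := by
    intro part hpart
    refine le_ciSup (f := fun m : ℤ => (m : ℝ) ^ 2 * |part (fCoeff f m)|)
      ⟨circleMean (fun x => |deriv (deriv f) x|), ?_⟩ n
    rintro _ ⟨m, rfl⟩
    exact (mul_le_mul_of_nonneg_left (hpart _) (sq_nonneg _)).trans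
      (sq_mul_norm_fCoeff_le_circleMean hf hper m)
  have hre : (n : ℝ) ^ 2 * |(fCoeff f n).re| ≤ seminorm2 f :=
    (hbound Complex.re Complex.abs_re_le_norm).trans (le_max_left _ _)
  have him : (n : ℝ) ^ 2 * |(fCoeff f n).im| ≤ seminorm2 f :=
    (hbound Complex.im Complex.abs_im_le_norm).trans (le_max_right _ _)
  calc (n : ℝ) ^ 2 * ‖fCoeff f n‖
      ≤ (n : ℝ) ^ 2 * (|(fCoeff f n).re| + |(fCoeff f n).im|) :=
        mul_le_mul_of_nonneg_left (Complex.norm_le_abs_re_add_abs_im _) (sq_nonneg _)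
    _ ≤ 2 * seminorm2 f := by linarith

lemma abs_sub_circleMean_le (hf : ContDiff ℝ 2 f) (hper : Function.Periodic f (2 * π))
    (x : ℝ) : |f x - circleMean f| ≤ 2 * seminorm2 f * ∑' n : ℤ, 1 / (n : ℝ) ^ 2 := by
  have hmajorant : Summable fun n : ℤ => 2 * seminorm2 f * (1 / (n : ℝ) ^ 2) :=
    (Real.summable_one_div_int_pow.2 one_lt_two).mul_left _
  have hcoeff : ∀ n : ℤ, n ≠ 0 → ‖fCoeff f n‖ ≤ 2 * seminorm2 f * (1 / (n : ℝ) ^ 2) := by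
    intro n hn
    have hn2 : 0 < (n : ℝ) ^ 2 := by positivity
    rw [mul_one_div, le_div_iff₀ hn2, mul_comm]
    exact sq_mul_norm_fCoeff_le hf hper n
  have hsum : Summable (fCoeff f) :=
    .of_norm_bounded_eventually hmajorant
      ((eventually_cofinite_ne 0).mono hcoeff)
  have hseries := (hasSum_fCoeff_mul_exp hf.continuous hper hsum x).sub
    (hasSum_ite_eq (0 : ℤ) (fCoeff f 0))
  have hterm : ∀ n : ℤ, ‖fCoeff f n * Complex.exp (Complex.I * n * x)
      - if n = 0 then fCoeff f 0 else 0‖ ≤ 2 * seminorm2 f * (1 / (n : ℝ) ^ 2) := by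
    intro n
    rcases eq_or_ne n 0 with rfl | hn
    · simp
    rw [if_neg hn, sub_zero, norm_mul, norm_exp_I_mul_intCast_mul, mul_one]
    exact hcoeff n hn
  have h := hseries.tsum_eq ▸ tsum_of_norm_bounded hmajorant.hasSum hterm
  rwa [fCoeff_zero hf.continuous, ← Complex.ofReal_sub, Complex.norm_real, tsum_mul_left] at h

end Seminorm

/-! ### The support function and the isoperimetric deficit -/

/-- The closing condition on the radius of curvature `ρ`, as a function of the normal angle:
`∫ e^{iθ} ρ(θ) dθ = 0` over a period. -/
structure IsClosing (ρ : ℝ → ℝ) : Prop where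
  circleMean_cos_mul : circleMean (fun x => cos x * ρ x) = 0
  circleMean_sin_mul : circleMean (fun x => sin x * ρ x) = 0

/-- The support function `h` of the curve with radius of curvature `ρ`, normalized by
`h(0) = h'(0) = 0`; it solves `h'' + h = ρ`. -/
noncomputable def supportFun (ρ : ℝ → ℝ) (θ : ℝ) : ℝ :=
  sin θ * (∫ φ in (0 : ℝ)..θ, cos φ * ρ φ) - cos θ * (∫ φ in (0 : ℝ)..θ, sin φ * ρ φ)

/-- The derivative of `supportFun ρ`. -/
noncomputable def supportFunDeriv (ρ : ℝ → ℝ) (θ : ℝ) : ℝ :=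
  cos θ * (∫ φ in (0 : ℝ)..θ, cos φ * ρ φ) + sin θ * (∫ φ in (0 : ℝ)..θ, sin φ * ρ φ)

/-- The area enclosed by the curve with radius of curvature `ρ`, divided by `π` so that the circle
of radius `r` has normalized area `r²`. -/
noncomputable def normalizedArea (ρ : ℝ → ℝ) : ℝ := circleMean (fun x => supportFun ρ x * ρ x)

/-- The isoperimetric deficit `(L² - 4πA) / (4π²)`, where `L = 2π · circleMean ρ` is the length and
`A = π · normalizedArea ρ` the enclosed area. -/
noncomputable def isoDeficit (ρ : ℝ → ℝ) : ℝ := circleMean ρ ^ 2 - normalizedArea ρ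

/-- The deviation of the support function from that of the circle with the same length, after
moving the origin so that the first harmonics vanish. -/
noncomputable def supportDev (ρ : ℝ → ℝ) (x : ℝ) : ℝ :=
  supportFun ρ x - circleMean ρ - 2 * circleMean (fun y => supportFun ρ y * cos y) * cos x
    - 2 * circleMean (fun y => supportFun ρ y * sin y) * sin x

/-- The derivative of `supportDev ρ`. -/
noncomputable def supportDevDeriv (ρ : ℝ → ℝ) (x : ℝ) : ℝ :=
  supportFunDeriv ρ x + 2 * circleMean (fun y => supportFun ρ y * cos y) * sin x
    - 2 * circleMean (fun y => supportFun ρ y * sin y) * cos x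

lemma circleMean_cos : circleMean cos = 0 := by simp [circleMean]

lemma circleMean_sin : circleMean sin = 0 := by simp [circleMean]

lemma circleMean_cos_sq : circleMean (fun x => cos x ^ 2) = 1 / 2 := by
  rw [circleMean, integral_cos_sq]
  simp [field]

lemma circleMean_sin_sq : circleMean (fun x => sin x ^ 2) = 1 / 2 := by
  rw [circleMean, integral_sin_sq]
  simp [field]

lemma circleMean_sin_mul_cos : circleMean (fun x => sin x * cos x) = 0 := by
  rw [circleMean, integral_sin_mul_cos₁]
  simp

section SupportFun

variable {ρ : ℝ → ℝ}

lemma hasDerivAt_integral_cos_mul (hρ : Continuous ρ) (x : ℝ) :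
    HasDerivAt (fun θ => ∫ φ in (0 : ℝ)..θ, cos φ * ρ φ) (cos x * ρ x) x :=
  ((continuous_cos.mul hρ).integral_hasStrictDerivAt 0 x).hasDerivAt

lemma hasDerivAt_integral_sin_mul (hρ : Continuous ρ) (x : ℝ) :
    HasDerivAt (fun θ => ∫ φ in (0 : ℝ)..θ, sin φ * ρ φ) (sin x * ρ x) x :=
  ((continuous_sin.mul hρ).integral_hasStrictDerivAt 0 x).hasDerivAt

lemma hasDerivAt_supportFun (hρ : Continuous ρ) (x : ℝ) :
    HasDerivAt (supportFun ρ) (supportFunDeriv ρ x) x := by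
  refine (((hasDerivAt_sin x).mul (hasDerivAt_integral_cos_mul hρ x)).sub
    ((hasDerivAt_cos x).mul (hasDerivAt_integral_sin_mul hρ x))).congr_deriv ?_
  rw [supportFunDeriv]
  ring

lemma hasDerivAt_supportFunDeriv (hρ : Continuous ρ) (x : ℝ) :
    HasDerivAt (supportFunDeriv ρ) (ρ x - supportFun ρ x) x := by
  refine (((hasDerivAt_cos x).mul (hasDerivAt_integral_cos_mul hρ x)).add
    ((hasDerivAt_sin x).mul (hasDerivAt_integral_sin_mul hρ x))).congr_deriv ?_
  rw [supportFun]
  linear_combination ρ x * sin_sq_add_cos_sq x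

lemma continuous_supportFun (hρ : Continuous ρ) : Continuous (supportFun ρ) :=
  continuous_iff_continuousAt.2 fun x => (hasDerivAt_supportFun hρ x).continuousAt

lemma IsClosing.integral_cos_mul (hcl : IsClosing ρ) :
    ∫ φ in (0 : ℝ)..2 * π, cos φ * ρ φ = 0 :=
  (div_eq_zero_iff.1 hcl.circleMean_cos_mul).resolve_right two_pi_pos.ne'

lemma IsClosing.integral_sin_mul (hcl : IsClosing ρ) :
    ∫ φ in (0 : ℝ)..2 * π, sin φ * ρ φ = 0 :=
  (div_eq_zero_iff.1 hcl.circleMean_sin_mul).resolve_right two_pi_pos.ne'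

lemma supportFun_zero_eq_two_pi (hcl : IsClosing ρ) : supportFun ρ 0 = supportFun ρ (2 * π) := by
  simp [supportFun, hcl.integral_sin_mul]

lemma supportFunDeriv_zero_eq_two_pi (hcl : IsClosing ρ) :
    supportFunDeriv ρ 0 = supportFunDeriv ρ (2 * π) := by
  simp [supportFunDeriv, hcl.integral_cos_mul]

lemma circleMean_supportFun (hρ : Continuous ρ) (hcl : IsClosing ρ) :
    circleMean (supportFun ρ) = circleMean ρ := by
  have hc := continuous_supportFun hρ
  have h := circleMean_deriv_eq_zero (hasDerivAt_supportFunDeriv hρ) (by fun_prop)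
    (supportFunDeriv_zero_eq_two_pi hcl)
  rw [circleMean_sub hρ hc] at h
  linarith

lemma hasDerivAt_supportDev (hρ : Continuous ρ) (x : ℝ) :
    HasDerivAt (supportDev ρ) (supportDevDeriv ρ x) x := by
  refine ((((hasDerivAt_supportFun hρ x).sub_const _).sub ((hasDerivAt_cos x).const_mul _)).sub
    ((hasDerivAt_sin x).const_mul _)).congr_deriv ?_
  rw [supportDevDeriv]
  ring

lemma hasDerivAt_supportDevDeriv (hρ : Continuous ρ) (x : ℝ) :
    HasDerivAt (supportDevDeriv ρ) (ρ x - circleMean ρ - supportDev ρ x) x := by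
  refine (((hasDerivAt_supportFunDeriv hρ x).add ((hasDerivAt_sin x).const_mul _)).sub
    ((hasDerivAt_cos x).const_mul _)).congr_deriv ?_
  rw [supportDev]
  ring

lemma continuous_supportDev (hρ : Continuous ρ) : Continuous (supportDev ρ) :=
  continuous_iff_continuousAt.2 fun x => (hasDerivAt_supportDev hρ x).continuousAt

lemma continuous_supportDevDeriv (hρ : Continuous ρ) : Continuous (supportDevDeriv ρ) :=
  continuous_iff_continuousAt.2 fun x => (hasDerivAt_supportDevDeriv hρ x).continuousAt

lemma supportDev_zero_eq_two_pi (hcl : IsClosing ρ) : supportDev ρ 0 = supportDev ρ (2 * π) := by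
  simp [supportDev, supportFun_zero_eq_two_pi hcl]

lemma supportDevDeriv_zero_eq_two_pi (hcl : IsClosing ρ) :
    supportDevDeriv ρ 0 = supportDevDeriv ρ (2 * π) := by
  simp [supportDevDeriv, supportFunDeriv_zero_eq_two_pi hcl]

lemma circleMean_supportDev_mul (hρ : Continuous ρ) {g : ℝ → ℝ} (hg : Continuous g) :
    circleMean (fun x => supportDev ρ x * g x) =
      circleMean (fun x => supportFun ρ x * g x) - circleMean ρ * circleMean g
        - 2 * circleMean (fun x => supportFun ρ x * cos x) * circleMean (fun x => cos x * g x)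
        - 2 * circleMean (fun x => supportFun ρ x * sin x) * circleMean (fun x => sin x * g x) := by
  have hc := continuous_supportFun hρ
  simp_rw [supportDev, sub_mul, mul_assoc _ (cos _) (g _), mul_assoc _ (sin _) (g _)]
  simp (disch := fun_prop) only [circleMean_sub, circleMean_const_mul]

lemma circleMean_supportDev (hρ : Continuous ρ) (hcl : IsClosing ρ) :
    circleMean (supportDev ρ) = 0 := by
  simpa [circleMean_supportFun hρ hcl, circleMean_cos, circleMean_sin, circleMean_const]
    using circleMean_supportDev_mul hρ (continuous_const (y := (1 : ℝ)))

lemma circleMean_supportDev_mul_cos (hρ : Continuous ρ) :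
    circleMean (fun x => supportDev ρ x * cos x) = 0 := by
  rw [circleMean_supportDev_mul hρ continuous_cos, circleMean_sin_mul_cos, circleMean_cos]
  simp_rw [← sq, circleMean_cos_sq]
  ring

lemma circleMean_supportDev_mul_sin (hρ : Continuous ρ) :
    circleMean (fun x => supportDev ρ x * sin x) = 0 := by
  rw [circleMean_supportDev_mul hρ continuous_sin, circleMean_sin]
  simp_rw [mul_comm (cos _) (sin _), circleMean_sin_mul_cos, ← sq, circleMean_sin_sq]
  ring

lemma circleMean_supportDev_mul_self (hρ : Continuous ρ) (hcl : IsClosing ρ) :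
    circleMean (fun x => supportDev ρ x * ρ x) = -isoDeficit ρ := by
  rw [circleMean_supportDev_mul hρ hρ, hcl.circleMean_cos_mul, hcl.circleMean_sin_mul, isoDeficit,
    normalizedArea]
  ring

lemma circleMean_sq_supportDevDeriv (hρ : Continuous ρ) (hcl : IsClosing ρ) :
    circleMean (fun x => supportDevDeriv ρ x ^ 2) =
      isoDeficit ρ + circleMean (fun x => supportDev ρ x ^ 2) := by
  have hf := continuous_supportDev hρ
  have hf' := continuous_supportDevDeriv hρ
  have hparts := circleMean_mul_deriv (hasDerivAt_supportDev hρ) (hasDerivAt_supportDevDeriv hρ)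
    hf' (by fun_prop) (supportDev_zero_eq_two_pi hcl) (supportDevDeriv_zero_eq_two_pi hcl)
  have hexp : ∀ x, supportDev ρ x * (ρ x - circleMean ρ - supportDev ρ x) =
      supportDev ρ x * ρ x - circleMean ρ * supportDev ρ x - supportDev ρ x ^ 2 := fun x => by ring
  simp_rw [hexp, ← sq] at hparts
  simp (disch := fun_prop) only [circleMean_sub, circleMean_const_mul,
    circleMean_supportDev hρ hcl, circleMean_supportDev_mul_self hρ hcl] at hparts
  linarith

lemma three_mul_circleMean_sq_supportDev_le (hρ : Continuous ρ) (hcl : IsClosing ρ) :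
    3 * circleMean (fun x => supportDev ρ x ^ 2) ≤ isoDeficit ρ := by
  have hwirtinger := four_mul_circleMean_sq_le_circleMean_sq_deriv (hasDerivAt_supportDev hρ)
    (continuous_supportDevDeriv hρ) (supportDev_zero_eq_two_pi hcl)
    (circleMean_supportDev hρ hcl) (circleMean_supportDev_mul_cos hρ)
    (circleMean_supportDev_mul_sin hρ)
  linarith [circleMean_sq_supportDevDeriv hρ hcl]

lemma three_mul_circleMean_sq_supportDevDeriv_le (hρ : Continuous ρ) (hcl : IsClosing ρ) :
    3 * circleMean (fun x => supportDevDeriv ρ x ^ 2) ≤ 4 * isoDeficit ρ := by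
  linarith [circleMean_sq_supportDevDeriv hρ hcl, three_mul_circleMean_sq_supportDev_le hρ hcl]

lemma isoDeficit_nonneg (hρ : Continuous ρ) (hcl : IsClosing ρ) : 0 ≤ isoDeficit ρ := by
  have h : 0 ≤ circleMean (fun x => supportDev ρ x ^ 2) := circleMean_nonneg fun x => sq_nonneg _
  linarith [three_mul_circleMean_sq_supportDev_le hρ hcl]

lemma sq_supportDev_le (hρ : Continuous ρ) (hcl : IsClosing ρ) {x : ℝ}
    (hx : x ∈ Icc 0 (2 * π)) : supportDev ρ x ^ 2 ≤ 54 * isoDeficit ρ := by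
  obtain ⟨z, hz, hfz⟩ := exists_eq_circleMean (continuous_supportDev hρ)
  have hosc := sq_sub_le_circleMean_sq_deriv (hasDerivAt_supportDev hρ)
    (continuous_supportDevDeriv hρ) hx hz
  rw [hfz, circleMean_supportDev hρ hcl, sub_zero] at hosc
  have hdist : |x - z| ≤ 2 * π := by
    rw [abs_le]; constructor <;> linarith [hx.1, hx.2, hz.1, hz.2]
  have hmean : 0 ≤ circleMean (fun y => supportDevDeriv ρ y ^ 2) :=
    circleMean_nonneg fun y => sq_nonneg _
  have hpi2 : π ^ 2 ≤ 10 := by nlinarith [pi_lt_d2, pi_pos]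
  calc supportDev ρ x ^ 2
      ≤ 2 * π * (2 * π * circleMean (fun y => supportDevDeriv ρ y ^ 2)) :=
        hosc.trans (mul_le_mul_of_nonneg_right hdist (by positivity))
    _ ≤ 40 * circleMean (fun y => supportDevDeriv ρ y ^ 2) := by nlinarith
    _ ≤ 54 * isoDeficit ρ := by
        linarith [three_mul_circleMean_sq_supportDevDeriv_le hρ hcl, isoDeficit_nonneg hρ hcl]

lemma isoDeficit_le_circleMean_sq_sub (hρ : Continuous ρ) (hcl : IsClosing ρ) :
    isoDeficit ρ ≤ circleMean (fun x => (ρ x - circleMean ρ) ^ 2) := by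
  have hf := continuous_supportDev hρ
  have hsq : 0 ≤ circleMean (fun x => (supportDev ρ x + (ρ x - circleMean ρ)) ^ 2) :=
    circleMean_nonneg fun x => sq_nonneg _
  have hexp : ∀ x, (supportDev ρ x + (ρ x - circleMean ρ)) ^ 2 = supportDev ρ x ^ 2
      + 2 * (supportDev ρ x * ρ x) - 2 * circleMean ρ * supportDev ρ x
      + (ρ x - circleMean ρ) ^ 2 := fun x => by ring
  simp_rw [hexp] at hsq
  rw [circleMean_add (by fun_prop) (by fun_prop)] at hsq
  simp (disch := fun_prop) only [circleMean_add, circleMean_sub (f := fun _ => _ + _),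
    circleMean_const_mul, circleMean_supportDev hρ hcl,
    circleMean_supportDev_mul_self hρ hcl] at hsq
  linarith [three_mul_circleMean_sq_supportDev_le hρ hcl, isoDeficit_nonneg hρ hcl]

end SupportFun

/-! ### Nearly circular curves -/

section NearlyCircular

variable {ρ : ℝ → ℝ}

/-- Integrating `f²(f'' + f) = f²(ρ - R)` by parts leaves the cubic terms `f³ - 2 f f'²`, which are
controlled by the sup bound on the deviation `f`. -/
lemma circleMean_sq_supportDev_mul_le (hρ : Continuous ρ) (hcl : IsClosing ρ)
    (hR : 0 < circleMean ρ) (hE : 1200 * isoDeficit ρ ≤ circleMean ρ ^ 2) :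
    circleMean (fun x => supportDev ρ x ^ 2 * ρ x) ≤ circleMean ρ * isoDeficit ρ := by
  have hf := continuous_supportDev hρ
  have hf' := continuous_supportDevDeriv hρ
  have hparts := circleMean_mul_deriv (fun x => (hasDerivAt_supportDev hρ x).fun_pow 2)
    (hasDerivAt_supportDevDeriv hρ) (by fun_prop) (by fun_prop)
    (by rw [supportDev_zero_eq_two_pi hcl]) (supportDevDeriv_zero_eq_two_pi hcl)
  set R := circleMean ρ
  set f := supportDev ρ
  set f' := supportDevDeriv ρ
  have hsup : ∀ x ∈ Icc 0 (2 * π), |f x| ≤ 2 / 9 * R := fun x hx =>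
    abs_le_of_sq_le_sq (by nlinarith [sq_supportDev_le hρ hcl hx]) (by positivity)
  have hcubic : circleMean (fun x => f x ^ 2 * ρ x) =
      R * circleMean (fun x => f x ^ 2) + circleMean (fun x => f x * (f x ^ 2 - 2 * f' x ^ 2)) := by
    have hleft : ∀ x, f x ^ 2 * ρ x = f x ^ 2 * (ρ x - R - f x) + R * f x ^ 2 + f x ^ 3 :=
      fun x => by ring
    have hright : ∀ x, f x * (f x ^ 2 - 2 * f' x ^ 2) =
        f x ^ 3 - (2 : ℕ) * f x ^ (2 - 1) * f' x * f' x := fun x => by push_cast; ring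
    simp_rw [hleft, hright]
    rw [circleMean_add (by fun_prop) (by fun_prop), circleMean_add (by fun_prop) (by fun_prop),
      circleMean_sub (by fun_prop) (by fun_prop), circleMean_const_mul, hparts]
    ring
  have hbound : circleMean (fun x => f x * (f x ^ 2 - 2 * f' x ^ 2)) ≤
      2 / 9 * R * (circleMean (fun x => f x ^ 2) + 2 * circleMean (fun x => f' x ^ 2)) := by
    rw [← circleMean_const_mul 2, ← circleMean_add (by fun_prop) (by fun_prop),
      ← circleMean_const_mul]
    refine circleMean_mono (by fun_prop) (by fun_prop) fun x hx => ?_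
    have h := abs_le.1 (hsup x hx)
    nlinarith [mul_nonneg (sub_nonneg.2 h.2) (sq_nonneg (f x)),
      mul_nonneg (by linarith [h.1] : 0 ≤ f x + 2 / 9 * R) (sq_nonneg (f' x))]
  nlinarith [mul_le_mul_of_nonneg_left (three_mul_circleMean_sq_supportDev_le hρ hcl) hR.le,
    mul_le_mul_of_nonneg_left (three_mul_circleMean_sq_supportDevDeriv_le hρ hcl) hR.le]

/-- Gage's inequality `π L / A ≤ ∫ k² ds`, for nearly circular curves. -/
lemma circleMean_le_normalizedArea_mul (hρ : Continuous ρ) (hpos : ∀ x, 0 < ρ x)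
    (hcl : IsClosing ρ) (hE : 1200 * isoDeficit ρ ≤ circleMean ρ ^ 2) :
    circleMean ρ ≤ normalizedArea ρ * circleMean (fun x => (ρ x)⁻¹) := by
  have hf := continuous_supportDev hρ
  have hinv : Continuous fun x => (ρ x)⁻¹ := hρ.inv₀ fun x => (hpos x).ne'
  have hR : 0 < circleMean ρ := circleMean_pos hρ hpos
  have hcubic := circleMean_sq_supportDev_mul_le hρ hcl hR hE
  have harea : isoDeficit ρ = circleMean ρ ^ 2 - normalizedArea ρ := rfl
  set R := circleMean ρ
  set f := supportDev ρ
  set A := normalizedArea ρ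
  have hA : 0 < A := by nlinarith
  have hsq : 0 ≤ circleMean (fun x => (ρ x)⁻¹ * (A - (R + f x) * ρ x) ^ 2) :=
    circleMean_nonneg fun x => mul_nonneg (inv_nonneg.2 (hpos x).le) (sq_nonneg _)
  have hexp : ∀ x, (ρ x)⁻¹ * (A - (R + f x) * ρ x) ^ 2 =
      A ^ 2 * (ρ x)⁻¹ - 2 * A * R - 2 * A * f x + R ^ 2 * ρ x + 2 * R * (f x * ρ x)
        + f x ^ 2 * ρ x := fun x => by
    have := (hpos x).ne'
    field_simp
    ring
  simp_rw [hexp] at hsq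
  rw [circleMean_add (by fun_prop) (by fun_prop)] at hsq
  simp (disch := fun_prop) only [circleMean_add, circleMean_sub, circleMean_const_mul,
    circleMean_const, f, circleMean_supportDev hρ hcl,
    circleMean_supportDev_mul_self hρ hcl] at hsq
  have hdiff : 0 ≤ A * (A * circleMean (fun x => (ρ x)⁻¹) - R) := by nlinarith
  linarith [nonneg_of_mul_nonneg_right hdiff hA]

lemma isoDeficit_le_of_inv_near (hpos : ∀ x, 0 < ρ x) (hρ : Continuous ρ) (hcl : IsClosing ρ)
    {m : ℝ} (hm : 0 < m) (hnear : ∀ x, |(ρ x)⁻¹ - m| ≤ m / 10 ^ 7) :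
    2 * 10 ^ 12 * isoDeficit ρ ≤ circleMean ρ ^ 2 := by
  set lo := ((1 + 1 / 10 ^ 7) * m)⁻¹ with hlo
  set hi := ((1 - 1 / 10 ^ 7) * m)⁻¹ with hhi
  have hlo_le : ∀ x, lo ≤ ρ x := fun x =>
    inv_le_of_inv_le₀ (hpos x) (by linarith [(abs_le.1 (hnear x)).2])
  have hle_hi : ∀ x, ρ x ≤ hi := fun x =>
    (le_inv_comm₀ (mul_pos (by norm_num) hm) (hpos x)).1 (by linarith [(abs_le.1 (hnear x)).1])
  have hlo_mean : lo ≤ circleMean ρ := le_circleMean_of_le hρ fun x _ => hlo_le x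
  have hmean_hi : circleMean ρ ≤ hi := circleMean_le_of_le hρ fun x _ => hle_hi x
  have hlo_pos : 0 < lo := by positivity
  have hwidth : hi - lo ≤ 3 / 10 ^ 7 * lo := by
    have hratio : hi = lo * ((1 + 1 / 10 ^ 7) / (1 - 1 / 10 ^ 7)) := by
      rw [hlo, hhi]; field_simp
    rw [hratio]
    nlinarith
  have hdev : circleMean (fun x => (ρ x - circleMean ρ) ^ 2) ≤ (3 / 10 ^ 7 * lo) ^ 2 :=
    circleMean_le_of_le (by fun_prop) fun x _ =>
      sq_le_sq' (by linarith [hlo_le x]) (by linarith [hle_hi x])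
  have hsq : lo ^ 2 ≤ circleMean ρ ^ 2 := pow_le_pow_left₀ hlo_pos.le hlo_mean 2
  nlinarith [isoDeficit_le_circleMean_sq_sub hρ hcl]

lemma isoDeficit_inv_le_of_seminorm2_le {ψ : ℝ → ℝ} (hψ : ContDiff ℝ 2 ψ)
    (hpos : ∀ x, 0 < ψ x) (hper : Function.Periodic ψ (2 * π))
    (hcl : IsClosing (fun x => (ψ x)⁻¹))
    (hsmall : (2 * 10 ^ 7 * (∑' n : ℤ, 1 / (n : ℝ) ^ 2) + 1) * seminorm2 ψ ≤ circleMean ψ) :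
    2 * 10 ^ 12 * isoDeficit (fun x => (ψ x)⁻¹) ≤ circleMean (fun x => (ψ x)⁻¹) ^ 2 := by
  refine isoDeficit_le_of_inv_near (fun x => inv_pos.2 (hpos x))
    (hψ.continuous.inv₀ fun x => (hpos x).ne') hcl (circleMean_pos hψ.continuous hpos) fun x => ?_
  rw [inv_inv, le_div_iff₀ (by norm_num)]
  nlinarith [abs_sub_circleMean_le hψ hper x, seminorm2_nonneg ψ]

/-- On an interval where `ρ ≤ R/2` the deviation `f` is uniformly concave, `f'' ≤ -R/4`, which is
incompatible with its being small compared to `R`. -/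
lemma exists_half_circleMean_lt (hρ : Continuous ρ) (hcl : IsClosing ρ)
    (hR : 0 < circleMean ρ) (hE : 10 ^ 12 * isoDeficit ρ ≤ circleMean ρ ^ 2) {a : ℝ} (ha : 0 ≤ a)
    (ha' : a + 1 / 32 ≤ 2 * π) : ∃ x ∈ Icc a (a + 1 / 32), circleMean ρ / 2 < ρ x := by
  by_contra! hle
  set R := circleMean ρ
  set f := supportDev ρ
  have hf : Continuous f := continuous_supportDev hρ
  have hsup : ∀ x ∈ Icc a (a + 1 / 32), |f x| ≤ R / 100000 := fun x hx =>
    abs_le_of_sq_le_sq (by nlinarith [sq_supportDev_le hρ hcl ⟨ha.trans hx.1, hx.2.trans ha'⟩])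
      (by positivity)
  have hconc : ConcaveOn ℝ (Icc a (a + 1 / 32)) (fun x => f x + R / 8 * x ^ 2) := by
    refine concaveOn_of_hasDerivWithinAt2_nonpos (convex_Icc _ _) (by fun_prop)
      (f' := fun x => supportDevDeriv ρ x + R / 4 * x) (f'' := fun x => ρ x - R - f x + R / 4)
      (fun x _ => ?_) (fun x _ => ?_) fun x hx => ?_
    · refine ((hasDerivAt_supportDev hρ x).add
        ((hasDerivAt_pow 2 x).const_mul (R / 8))).hasDerivWithinAt.congr_deriv ?_
      push_cast
      ring
    · refine ((hasDerivAt_supportDevDeriv hρ x).add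
        ((hasDerivAt_id x).const_mul (R / 4))).hasDerivWithinAt.congr_deriv ?_
      rw [mul_one]
    · linarith [hle x (interior_subset hx), (abs_le.1 (hsup x (interior_subset hx))).1]
  have hleft : a ∈ Icc a (a + 1 / 32) := ⟨le_rfl, by linarith⟩
  have hright : a + 1 / 32 ∈ Icc a (a + 1 / 32) := ⟨by linarith, le_rfl⟩
  have hmid : a + 1 / 64 ∈ Icc a (a + 1 / 32) := ⟨by linarith, by linarith⟩
  have hmidpoint := hconc.2 hleft hright (by norm_num : (0 : ℝ) ≤ 1 / 2)
    (by norm_num : (0 : ℝ) ≤ 1 / 2) (by norm_num)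
  have hcomb : (1 / 2 : ℝ) • a + (1 / 2 : ℝ) • (a + 1 / 32) = a + 1 / 64 := by
    simp only [smul_eq_mul]; ring
  rw [hcomb] at hmidpoint
  simp only [smul_eq_mul] at hmidpoint
  nlinarith [(abs_le.1 (hsup a hleft)).1, (abs_le.1 (hsup _ hright)).1,
    (abs_le.1 (hsup _ hmid)).2]

lemma half_le_of_circleMean_sq_deriv_le {V V' : ℝ → ℝ} (hV : ∀ x, HasDerivAt V (V' x) x)
    (hV' : Continuous V') {x₀ x : ℝ} (hx₀ : x₀ ∈ Icc 0 (2 * π)) (hx : x ∈ Icc 0 (2 * π))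
    (hpos : 0 < V x₀) (henergy : circleMean (fun y => V' y ^ 2) ≤ 5 / 4 * V x₀ ^ 2)
    (hdist : |x - x₀| ≤ 1 / 32) : V x₀ / 2 ≤ V x := by
  have hnonneg : 0 ≤ circleMean (fun y => V' y ^ 2) := circleMean_nonneg fun y => sq_nonneg _
  have hosc : (V x - V x₀) ^ 2 ≤ (V x₀ / 2) ^ 2 := calc
    (V x - V x₀) ^ 2 ≤ |x - x₀| * (2 * π * circleMean (fun y => V' y ^ 2)) :=
      sq_sub_le_circleMean_sq_deriv hV hV' hx hx₀
    _ ≤ 1 / 32 * (6.3 * (5 / 4 * V x₀ ^ 2)) := by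
      gcongr
      linarith [pi_lt_d2]
    _ ≤ (V x₀ / 2) ^ 2 := by nlinarith
  linarith [(abs_le.1 (abs_le_of_sq_le_sq hosc (by positivity))).1]

lemma circleMean_le_four_mul {p : ℕ} (hp : p ≠ 0) (hρ : Continuous ρ) (hpos : ∀ x, 0 < ρ x)
    (hcl : IsClosing ρ) (hE : 10 ^ 12 * isoDeficit ρ ≤ circleMean ρ ^ 2) {V' : ℝ → ℝ}
    (hV : ∀ x, HasDerivAt (fun x => (ρ x)⁻¹ ^ p) (V' x) x) (hV' : Continuous V') {x₀ : ℝ}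
    (hx₀ : x₀ ∈ Icc 0 (2 * π))
    (henergy : circleMean (fun y => V' y ^ 2) ≤ 5 / 4 * ((ρ x₀)⁻¹ ^ p) ^ 2) :
    circleMean ρ ≤ 4 * ρ x₀ := by
  obtain ⟨a, ha, ha', hdist⟩ : ∃ a, 0 ≤ a ∧ a + 1 / 32 ≤ 2 * π ∧
      ∀ x ∈ Icc a (a + 1 / 32), |x - x₀| ≤ 1 / 32 := by
    rcases le_total x₀ π with h | h
    · refine ⟨x₀, hx₀.1, by linarith [pi_gt_three], fun x hx => ?_⟩
      rw [abs_le]; constructor <;> linarith [hx.1, hx.2]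
    · refine ⟨x₀ - 1 / 32, by linarith [pi_gt_three], by linarith [hx₀.2], fun x hx => ?_⟩
      rw [abs_le]; constructor <;> linarith [hx.1, hx.2]
  obtain ⟨x, hx, hlt⟩ := exists_half_circleMean_lt hρ hcl (circleMean_pos hρ hpos) hE ha ha'
  have hhalf := half_le_of_circleMean_sq_deriv_le hV hV' hx₀
    ⟨ha.trans hx.1, hx.2.trans ha'⟩ (pow_pos (inv_pos.2 (hpos x₀)) p) henergy (hdist x hx)
  have hpow : (2 * ρ x₀)⁻¹ ^ p ≤ (ρ x)⁻¹ ^ p := by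
    refine le_trans ?_ hhalf
    rw [mul_inv, mul_pow, inv_pow, mul_comm, ← div_eq_mul_inv]
    exact div_le_div_of_nonneg_left (pow_pos (inv_pos.2 (hpos x₀)) p).le two_pos
      (le_self_pow₀ one_le_two hp)
  have hinv := le_of_pow_le_pow_left₀ hp (inv_pos.2 (hpos x)).le hpow
  linarith [(inv_le_inv₀ (mul_pos two_pos (hpos x₀)) (hpos x)).1 hinv]

end NearlyCircular

/-! ### Variation of the area -/

section AreaVariation

variable {f g ρ σ : ℝ → ℝ}

lemma circleMean_mul_eq_of_hasDerivAt_sub {f' g' u w : ℝ → ℝ} (hf : ∀ x, HasDerivAt f (f' x) x)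
    (hf' : ∀ x, HasDerivAt f' (u x - f x) x) (hg : ∀ x, HasDerivAt g (g' x) x)
    (hg' : ∀ x, HasDerivAt g' (w x - g x) x) (hu : Continuous u) (hw : Continuous w)
    (hfper : f 0 = f (2 * π)) (hfper' : f' 0 = f' (2 * π)) (hgper : g 0 = g (2 * π))
    (hgper' : g' 0 = g' (2 * π)) :
    circleMean (fun x => f x * w x) = circleMean (fun x => u x * g x) := by
  have hfc : Continuous f := continuous_iff_continuousAt.2 fun x => (hf x).continuousAt
  have hgc : Continuous g := continuous_iff_continuousAt.2 fun x => (hg x).continuousAt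
  have hfc' : Continuous f' := continuous_iff_continuousAt.2 fun x => (hf' x).continuousAt
  have hgc' : Continuous g' := continuous_iff_continuousAt.2 fun x => (hg' x).continuousAt
  have hfg := circleMean_mul_deriv hf hg' hfc' (by fun_prop) hfper hgper'
  have hgf := circleMean_mul_deriv hg hf' hgc' (by fun_prop) hgper hfper'
  simp_rw [mul_comm (g' _), ← hfg] at hgf
  simp_rw [mul_sub, mul_comm (g _)] at hgf
  simp (disch := fun_prop) only [circleMean_sub] at hgf
  linarith

lemma circleMean_supportFun_mul_comm (hρ : Continuous ρ) (hσ : Continuous σ)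
    (hclρ : IsClosing ρ) (hclσ : IsClosing σ) :
    circleMean (fun x => supportFun ρ x * σ x) = circleMean (fun x => supportFun σ x * ρ x) := by
  simp_rw [mul_comm (supportFun σ _)]
  exact circleMean_mul_eq_of_hasDerivAt_sub (hasDerivAt_supportFun hρ)
    (hasDerivAt_supportFunDeriv hρ) (hasDerivAt_supportFun hσ) (hasDerivAt_supportFunDeriv hσ)
    hρ hσ (supportFun_zero_eq_two_pi hclρ) (supportFunDeriv_zero_eq_two_pi hclρ)
    (supportFun_zero_eq_two_pi hclσ) (supportFunDeriv_zero_eq_two_pi hclσ)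

lemma IsClosing.sub (hρ : Continuous ρ) (hσ : Continuous σ) (hclρ : IsClosing ρ)
    (hclσ : IsClosing σ) : IsClosing fun x => ρ x - σ x where
  circleMean_cos_mul := by
    simp_rw [mul_sub]
    simp (disch := fun_prop) only [circleMean_sub, hclρ.circleMean_cos_mul,
      hclσ.circleMean_cos_mul, sub_zero]
  circleMean_sin_mul := by
    simp_rw [mul_sub]
    simp (disch := fun_prop) only [circleMean_sub, hclρ.circleMean_sin_mul,
      hclσ.circleMean_sin_mul, sub_zero]

lemma supportFun_sub (hρ : Continuous ρ) (hσ : Continuous σ) (x : ℝ) :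
    supportFun (fun y => ρ y - σ y) x = supportFun ρ x - supportFun σ x := by
  simp only [supportFun, mul_sub]
  rw [intervalIntegral.integral_sub (Continuous.intervalIntegrable (by fun_prop) _ _)
      (Continuous.intervalIntegrable (by fun_prop) _ _),
    intervalIntegral.integral_sub (Continuous.intervalIntegrable (by fun_prop) _ _)
      (Continuous.intervalIntegrable (by fun_prop) _ _)]
  ring

lemma normalizedArea_sub (hρ : Continuous ρ) (hσ : Continuous σ) (hclρ : IsClosing ρ)
    (hclσ : IsClosing σ) :
    normalizedArea (fun x => ρ x - σ x) =
      normalizedArea ρ - 2 * circleMean (fun x => supportFun σ x * ρ x) + normalizedArea σ := by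
  have hρ' := continuous_supportFun hρ
  have hσ' := continuous_supportFun hσ
  simp_rw [normalizedArea, supportFun_sub hρ hσ, sub_mul, mul_sub]
  simp (disch := fun_prop) only [circleMean_sub (f := fun _ => _ - _), circleMean_sub]
  rw [circleMean_supportFun_mul_comm hρ hσ hclρ hclσ]
  ring

lemma abs_normalizedArea_le (hρ : Continuous ρ) (hcl : IsClosing ρ) :
    |normalizedArea ρ| ≤ circleMean (fun x => ρ x ^ 2) := by
  have hvar : circleMean (fun x => (ρ x - circleMean ρ) ^ 2) =
      circleMean (fun x => ρ x ^ 2) - circleMean ρ ^ 2 := by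
    have hexp : ∀ x, (ρ x - circleMean ρ) ^ 2 =
        ρ x ^ 2 - 2 * circleMean ρ * ρ x + circleMean ρ ^ 2 := fun x => by ring
    simp_rw [hexp]
    simp (disch := fun_prop) only [circleMean_add (f := fun _ => _ - _), circleMean_sub,
      circleMean_const_mul, circleMean_const]
    ring
  have hnonneg := isoDeficit_nonneg hρ hcl
  have hle := isoDeficit_le_circleMean_sq_sub hρ hcl
  rw [hvar, isoDeficit] at hle
  rw [isoDeficit] at hnonneg
  rw [abs_le]
  constructor <;> nlinarith [sq_nonneg (circleMean ρ)]

end AreaVariation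

/-! ### One-parameter families -/

section Family

variable {W : ℝ → ℝ → ℝ} {s I : Set ℝ} {t : ℝ}

lemma continuous_slice (hW : ContinuousOn (fun q : ℝ × ℝ => W q.1 q.2) (univ ×ˢ s)) (ht : t ∈ s) :
    Continuous fun x => W x t :=
  hW.comp_continuous (f := fun x : ℝ => (x, t)) (by fun_prop) fun _ => ⟨mem_univ _, ht⟩

lemma contDiff_slice {n : WithTop ℕ∞}
    (hW : ContDiffOn ℝ n (fun q : ℝ × ℝ => W q.1 q.2) (univ ×ˢ s)) (ht : t ∈ s) :
    ContDiff ℝ n fun x => W x t :=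
  contDiffOn_univ.1 <| hW.comp (f := fun x : ℝ => (x, t)) (by fun_prop) fun _ _ => ⟨mem_univ _, ht⟩

lemma continuous_subtype_swap (hW : ContinuousOn (fun q : ℝ × ℝ => W q.1 q.2) (univ ×ˢ s)) :
    Continuous fun q : s × ℝ => W q.2 q.1 :=
  hW.comp_continuous (f := fun q : s × ℝ => (q.2, (q.1 : ℝ))) (by fun_prop)
    fun q => ⟨mem_univ _, q.1.2⟩

lemma continuousOn_circleMean (hW : ContinuousOn (fun q : ℝ × ℝ => W q.1 q.2) (univ ×ˢ s)) :
    ContinuousOn (fun t => circleMean fun x => W x t) s := by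
  rw [continuousOn_iff_continuous_domRestrict]
  exact (intervalIntegral.continuous_parametric_intervalIntegral_of_continuous'
    (f := fun (t : s) x => W x t) (continuous_subtype_swap hW) 0 (2 * π)).div_const _

lemma continuousOn_normalizedArea (hW : ContinuousOn (fun q : ℝ × ℝ => W q.1 q.2) (univ ×ˢ s)) :
    ContinuousOn (fun t => normalizedArea fun x => W x t) s := by
  have hjoint := continuous_subtype_swap hW
  have hcos := intervalIntegral.continuous_parametric_primitive_of_continuous (μ := volume)
    (a₀ := 0) (f := fun (t : s) x => cos x * W x t)
    ((continuous_cos.comp continuous_snd).mul hjoint)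
  have hsin := intervalIntegral.continuous_parametric_primitive_of_continuous (μ := volume)
    (a₀ := 0) (f := fun (t : s) x => sin x * W x t)
    ((continuous_sin.comp continuous_snd).mul hjoint)
  rw [continuousOn_iff_continuous_domRestrict]
  refine (intervalIntegral.continuous_parametric_intervalIntegral_of_continuous'
    (f := fun (t : s) x => supportFun (fun y => W y t) x * W x t) ?_ 0 (2 * π)).div_const _
  exact (((continuous_sin.comp continuous_snd).mul hcos).sub
    ((continuous_cos.comp continuous_snd).mul hsin)).mul hjoint

lemma exists_lipschitz_time (hI : IsOpen I)
    (hW : ContDiffOn ℝ 1 (fun q : ℝ × ℝ => W q.1 q.2) (univ ×ˢ I)) (ht : t ∈ I) :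
    ∃ C ≥ (0 : ℝ), ∃ ε > (0 : ℝ), Metric.closedBall t ε ⊆ I ∧
      ∀ x ∈ Icc 0 (2 * π), ∀ a ∈ Metric.closedBall t ε, ∀ b ∈ Metric.closedBall t ε,
        |W x a - W x b| ≤ C * |a - b| := by
  obtain ⟨ε, hε, hball⟩ := Metric.nhds_basis_closedBall.mem_iff.1 (hI.mem_nhds ht)
  obtain ⟨K, hK⟩ := (hW.mono (prod_mono (subset_univ (Icc 0 (2 * π))) hball)).exists_lipschitzOnWith
    one_ne_zero ((convex_Icc _ _).prod (convex_closedBall _ _))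
    (isCompact_Icc.prod (isCompact_closedBall _ _))
  refine ⟨K, K.2, ε, hε, hball, fun x hx a ha b hb => ?_⟩
  simpa [Real.dist_eq, Prod.dist_eq] using hK.dist_le_mul (x, a) ⟨hx, ha⟩ (x, b) ⟨hx, hb⟩

lemma hasDerivAt_circleMean_mul (hI : IsOpen I)
    (hW : ContDiffOn ℝ 1 (fun q : ℝ × ℝ => W q.1 q.2) (univ ×ˢ I)) (ht : t ∈ I) {g W' : ℝ → ℝ}
    (hg : Continuous g) (hW' : Continuous W') (hd : ∀ x, HasDerivAt (W x) (W' x) t) :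
    HasDerivAt (fun s => circleMean fun x => g x * W x s) (circleMean fun x => g x * W' x) t := by
  obtain ⟨C, hC, ε, hε, hball, hlip⟩ := exists_lipschitz_time hI hW ht
  have hslice : ∀ s ∈ I, Continuous fun x => g x * W x s := fun s hs =>
    hg.mul (continuous_slice hW.continuousOn hs)
  have hmem := Metric.closedBall_mem_nhds t hε
  refine (intervalIntegral.hasDerivAt_integral_of_dominated_loc_of_lip
    (bound := fun x => C * |g x|) hmem ?_ ((hslice t ht).intervalIntegrable _ _)
    (Continuous.aestronglyMeasurable (by fun_prop)) (Eventually.of_forall fun x hx => ?_)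
    (Continuous.intervalIntegrable (by fun_prop) _ _)
    (Eventually.of_forall fun x _ => (hd x).const_mul _)).2.div_const _
  · filter_upwards [hmem] with s hs using (hslice s (hball hs)).aestronglyMeasurable
  · rw [uIoc_of_le two_pi_pos.le] at hx
    refine LipschitzOnWith.of_dist_le_mul fun a ha b hb => ?_
    have hbound := mul_le_mul_of_nonneg_left (hlip x (Ioc_subset_Icc_self hx) a ha b hb)
      (abs_nonneg (g x))
    rw [Real.dist_eq, Real.dist_eq, ← mul_sub, abs_mul, Real.coe_nnabs, abs_mul, abs_abs,
      abs_of_nonneg hC]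
    linarith

lemma hasDerivAt_circleMean (hI : IsOpen I)
    (hW : ContDiffOn ℝ 1 (fun q : ℝ × ℝ => W q.1 q.2) (univ ×ˢ I)) (ht : t ∈ I) {W' : ℝ → ℝ}
    (hW' : Continuous W') (hd : ∀ x, HasDerivAt (W x) (W' x) t) :
    HasDerivAt (fun s => circleMean fun x => W x s) (circleMean W') t := by
  simpa only [one_mul] using hasDerivAt_circleMean_mul hI hW ht (continuous_const (y := 1)) hW' hd

lemma hasDerivAt_zero_of_abs_le_sq {f : ℝ → ℝ} {C : ℝ}
    (hf : ∀ᶠ s in nhds t, |f s| ≤ C * (s - t) ^ 2) : HasDerivAt f 0 t := by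
  have hft : f t = 0 := by simpa using hf.self_of_nhds
  have hbig : f =O[nhds t] fun s => ‖s - t‖ ^ 2 :=
    Asymptotics.IsBigO.of_bound C (by simpa using hf)
  have hlittle := hbig.trans_isLittleO (Asymptotics.isLittleO_pow_sub_sub t one_lt_two)
  rw [hasDerivAt_iff_isLittleO]
  simpa [hft] using hlittle

/-- The area is a quadratic form bounded in `L²`, so its remainder is quadratic in time. -/
lemma hasDerivAt_normalizedArea (hI : IsOpen I)
    (hW : ContDiffOn ℝ 1 (fun q : ℝ × ℝ => W q.1 q.2) (univ ×ˢ I)) (ht : t ∈ I) {W' : ℝ → ℝ}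
    (hcl : ∀ s ∈ I, IsClosing fun x => W x s) (hW' : Continuous W')
    (hd : ∀ x, HasDerivAt (W x) (W' x) t) :
    HasDerivAt (fun s => normalizedArea fun x => W x s)
      (2 * circleMean fun x => supportFun (fun y => W y t) x * W' x) t := by
  have hslice : ∀ s ∈ I, Continuous fun x => W x s := fun s => continuous_slice hW.continuousOn
  obtain ⟨C, -, ε, hε, hball, hlip⟩ := exists_lipschitz_time hI hW ht
  have hquad : HasDerivAt (fun s => normalizedArea fun x => W x s - W x t) 0 t := by
    refine hasDerivAt_zero_of_abs_le_sq (C := C ^ 2) ?_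
    filter_upwards [Metric.closedBall_mem_nhds t hε] with s hs
    have hs' := hslice s (hball hs)
    have ht' := hslice t ht
    refine (abs_normalizedArea_le (by fun_prop)
      ((hcl s (hball hs)).sub hs' ht' (hcl t ht))).trans ?_
    refine circleMean_le_of_le (by fun_prop) fun x hx => ?_
    rw [← mul_pow, ← sq_abs, ← sq_abs (C * _), abs_mul]
    refine pow_le_pow_left₀ (abs_nonneg _) ((hlip x hx s hs t
      (Metric.mem_closedBall_self hε.le)).trans ?_) 2
    exact mul_le_mul_of_nonneg_right (le_abs_self C) (abs_nonneg _)
  have hlin := (hasDerivAt_circleMean_mul hI hW ht (continuous_supportFun (hslice t ht))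
    hW' hd).const_mul 2
  refine ((hquad.add hlin).sub_const (normalizedArea fun x => W x t)).congr_deriv
    (zero_add _) |>.congr_of_eventuallyEq ?_
  filter_upwards [hI.mem_nhds ht] with s hs
  simp only [Pi.add_apply]
  rw [normalizedArea_sub (hslice s hs) (hslice t ht) (hcl s hs) (hcl t ht)]
  ring

lemma hasDerivAt_fst_of_differentiableAt {E : Type*} [NormedAddCommGroup E] [NormedSpace ℝ E]
    {F : ℝ × ℝ → E} {x : ℝ} (hF : DifferentiableAt ℝ F (x, t)) :
    HasDerivAt (fun y => F (y, t)) (fderiv ℝ F (x, t) (1, 0)) x :=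
  HasFDerivAt.comp_hasDerivAt (l := F) x hF.hasFDerivAt
    ((hasDerivAt_id x).prodMk (hasDerivAt_const x t))

lemma hasDerivAt_snd_of_differentiableAt {E : Type*} [NormedAddCommGroup E] [NormedSpace ℝ E]
    {F : ℝ × ℝ → E} {x : ℝ} (hF : DifferentiableAt ℝ F (x, t)) :
    HasDerivAt (fun s => F (x, s)) (fderiv ℝ F (x, t) (0, 1)) t :=
  HasFDerivAt.comp_hasDerivAt (l := F) t hF.hasFDerivAt
    ((hasDerivAt_const t x).prodMk (hasDerivAt_id t))

lemma contDiffOn_deriv_fst {m n : WithTop ℕ∞} (hI : IsOpen I)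
    (hW : ContDiffOn ℝ n (fun q : ℝ × ℝ => W q.1 q.2) (univ ×ˢ I)) (hmn : m + 1 ≤ n) :
    ContDiffOn ℝ m (fun q : ℝ × ℝ => deriv (fun y => W y q.2) q.1) (univ ×ˢ I) := by
  have hopen : IsOpen ((univ : Set ℝ) ×ˢ I) := isOpen_univ.prod hI
  have hderiv : ContDiffOn ℝ m
      (fun q => fderiv ℝ (fun q : ℝ × ℝ => W q.1 q.2) q (1, 0)) (univ ×ˢ I) :=
    (hW.fderiv_of_isOpen hopen hmn).clm_apply contDiffOn_const
  refine hderiv.congr fun q hq => ?_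
  exact (hasDerivAt_fst_of_differentiableAt <| (hW.differentiableOn
    (one_pos.trans_le (le_add_self.trans hmn)).ne').differentiableAt (hopen.mem_nhds hq)).deriv

lemma hasDerivAt_deriv_comm (hI : IsOpen I)
    (hW : ContDiffOn ℝ 2 (fun q : ℝ × ℝ => W q.1 q.2) (univ ×ˢ I)) (ht : t ∈ I) (x : ℝ) :
    HasDerivAt (fun s => deriv (fun y => W y s) x) (deriv (fun y => deriv (W y) t) x) t := by
  set F := fun q : ℝ × ℝ => W q.1 q.2
  have hopen : IsOpen ((univ : Set ℝ) ×ˢ I) := isOpen_univ.prod hI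
  have hdiff : ∀ q ∈ (univ : Set ℝ) ×ˢ I, DifferentiableAt ℝ F q := fun q hq =>
    (hW.differentiableOn two_ne_zero).differentiableAt (hopen.mem_nhds hq)
  have hF : ContDiffAt ℝ 2 F (x, t) := hW.contDiffAt (hopen.mem_nhds ⟨mem_univ _, ht⟩)
  have hF' : DifferentiableAt ℝ (fderiv ℝ F) (x, t) :=
    (hF.fderiv_right (m := 1) le_rfl).differentiableAt one_ne_zero
  have hspace : HasDerivAt (fun y => fderiv ℝ F (y, t) (0, 1))
      (fderiv ℝ (fderiv ℝ F) (x, t) (1, 0) (0, 1)) x := by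
    simpa using (hasDerivAt_fst_of_differentiableAt hF').clm_apply (hasDerivAt_const x _)
  have htime : HasDerivAt (fun s => fderiv ℝ F (x, s) (1, 0))
      (fderiv ℝ (fderiv ℝ F) (x, t) (0, 1) (1, 0)) t := by
    simpa using (hasDerivAt_snd_of_differentiableAt hF').clm_apply (hasDerivAt_const t _)
  have hmixed : deriv (fun y => deriv (W y) t) x =
      fderiv ℝ (fderiv ℝ F) (x, t) (1, 0) (0, 1) := by
    rw [← hspace.deriv]
    congr 1
    ext y
    exact (hasDerivAt_snd_of_differentiableAt (hdiff (y, t) ⟨mem_univ _, ht⟩)).deriv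
  rw [hmixed, (hF.isSymmSndFDerivAt (by simp)).eq (1, 0) (0, 1)]
  refine htime.congr_of_eventuallyEq ?_
  filter_upwards [hI.mem_nhds ht] with s hs
  exact (hasDerivAt_fst_of_differentiableAt (hdiff (x, s) ⟨mem_univ _, hs⟩)).deriv

end Family

/-! ### Differential inequalities -/

lemma forall_lt_of_hasDerivAt_nonneg {f : ℝ → ℝ} {T c : ℝ} (hf : ContinuousOn f (Ico 0 T))
    (h0 : c < f 0) (hd : ∀ t ∈ Ioo 0 T, c < f t → ∃ d ≥ 0, HasDerivAt f d t) :
    ∀ t ∈ Ico 0 T, c < f t := by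
  intro t ht
  by_contra! hle
  have hsub : Icc 0 t ⊆ Ico 0 T := fun x hx => ⟨hx.1, hx.2.trans_lt ht.2⟩
  have hcompact : IsCompact (Icc 0 t ∩ f ⁻¹' Iic c) :=
    isCompact_Icc.of_isClosed_subset
      ((hf.mono hsub).preimage_isClosed_of_isClosed isClosed_Icc isClosed_Iic) inter_subset_left
  obtain ⟨a, ⟨⟨ha0, hat⟩, hac⟩, hamin⟩ := hcompact.exists_isLeast ⟨t, ⟨ht.1, le_rfl⟩, hle⟩
  have hgt : ∀ s ∈ Ioo 0 a, c < f s := fun s hs => by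
    by_contra! h
    exact hs.2.not_ge (hamin ⟨⟨hs.1.le, hs.2.le.trans hat⟩, h⟩)
  have hderiv : ∀ s ∈ Ioo 0 a, ∃ d ≥ 0, HasDerivAt f d s := fun s hs =>
    hd s ⟨hs.1, hs.2.trans_le (hat.trans ht.2.le)⟩ (hgt s hs)
  have hmono : MonotoneOn f (Icc 0 a) := by
    refine monotoneOn_of_deriv_nonneg (convex_Icc _ _)
      (hf.mono fun x hx => hsub ⟨hx.1, hx.2.trans hat⟩) ?_ ?_ <;>
    · rw [interior_Icc]
      intro s hs
      obtain ⟨d, hd0, hds⟩ := hderiv s hs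
      first | exact hds.differentiableAt.differentiableWithinAt | rwa [hds.deriv]
  exact (h0.trans_le (hmono ⟨le_rfl, ha0⟩ ⟨ha0, le_rfl⟩ ha0)).not_ge hac

lemma mul_sub_le_of_hasDerivAt_le_neg {f f' : ℝ → ℝ} {T A : ℝ} (hf : ContinuousOn f (Ico 0 T))
    (hd : ∀ t ∈ Ioo 0 T, HasDerivAt f (f' t) t) (hf' : ∀ t ∈ Ioo 0 T, f' t ≤ -A)
    (hlim : Tendsto f (nhdsWithin T (Iio T)) (nhds 0)) {t : ℝ} (ht : t ∈ Ico 0 T) :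
    A * (T - t) ≤ f t := by
  have hanti : AntitoneOn (fun s => f s + A * s) (Ico 0 T) := by
    refine antitoneOn_of_hasDerivWithinAt_nonpos (f' := fun s => f' s + A * 1) (convex_Ico _ _)
      (hf.add (by fun_prop)) ?_ ?_ <;> rw [interior_Ico] <;> intro s hs
    · exact ((hd s hs).add ((hasDerivAt_id s).const_mul A)).hasDerivWithinAt
    · linarith [hf' s hs]
  have hlin : Tendsto (fun s => A * s) (nhdsWithin T (Iio T)) (nhds (A * T)) :=
    ((continuous_const_mul A).tendsto T).mono_left nhdsWithin_le_nhds
  have hle : 0 + A * T ≤ f t + A * t := by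
    refine le_of_tendsto (hlim.add hlin) ?_
    filter_upwards [Ico_mem_nhdsLT ht.2] with s hs
    exact hanti ht ⟨ht.1.trans hs.1, hs.2⟩ hs.1
  linarith

/-! ### The `p`-curve shortening flow -/

/-- `V'' + V` for the speed `V = k ^ p` of the flow. It drives the evolution of every geometric
quantity. -/
noncomputable def speedSource (p : ℕ) (k : ℝ → ℝ → ℝ) (θ t : ℝ) : ℝ :=
  deriv (deriv fun x => k x t ^ p) θ + k θ t ^ p

/-- The mean radius of curvature, that is, the length of the curve divided by `2π`. -/
noncomputable def meanRadius (k : ℝ → ℝ → ℝ) (t : ℝ) : ℝ := circleMean fun θ => (k θ t)⁻¹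

/-- The mean of `V² - V'²` for the speed `V = k ^ p`, whose gradient flow (for a weighted metric)
is the evolution of `V`. -/
noncomputable def speedEnergy (p : ℕ) (k : ℝ → ℝ → ℝ) (t : ℝ) : ℝ :=
  circleMean fun θ => (k θ t ^ p) ^ 2 - deriv (fun x => k x t ^ p) θ ^ 2

lemma deriv_deriv_pow {f : ℝ → ℝ} (hf : ContDiff ℝ 2 f) (p : ℕ) (x : ℝ) :
    deriv (deriv fun x => f x ^ p) x =
      p * (f x ^ (p - 1) * deriv (deriv f) x + ((p : ℝ) - 1) * f x ^ (p - 2) * deriv f x ^ 2) := by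
  have hd : ∀ y, HasDerivAt f (deriv f y) y := fun y =>
    (hf.differentiable two_ne_zero y).hasDerivAt
  have hdd : HasDerivAt (deriv f) (deriv (deriv f) x) x :=
    (hf.differentiable_deriv_two x).hasDerivAt
  have hfirst : (deriv fun x => f x ^ p) = fun y => p * f y ^ (p - 1) * deriv f y :=
    funext fun y => ((hd y).fun_pow p).deriv
  rw [hfirst, ((((hd x).fun_pow (p - 1)).const_mul (p : ℝ)).fun_mul hdd).deriv]
  rcases p with _ | p
  · simp
  · rw [Nat.add_sub_cancel, show p + 1 - 2 = p - 1 by omega]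
    push_cast
    ring

lemma isClosing_inv_of_integral_eq_zero {f : ℝ → ℝ} (hf : Continuous f) (hpos : ∀ x, 0 < f x)
    (hint : (∫ θ in (0 : ℝ)..2 * π, Complex.exp (Complex.I * θ) / (f θ : ℂ)) = 0) :
    IsClosing fun x => (f x)⁻¹ := by
  have hinv : Continuous fun x => (f x)⁻¹ := hf.inv₀ fun x => (hpos x).ne'
  have hexp : ∀ θ : ℝ, Complex.exp (Complex.I * θ) / (f θ : ℂ) =
      ((cos θ * (f θ)⁻¹ : ℝ) : ℂ) + Complex.I * ((sin θ * (f θ)⁻¹ : ℝ) : ℂ) := fun θ => by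
    rw [mul_comm, Complex.exp_mul_I]
    push_cast
    ring
  simp_rw [hexp] at hint
  rw [intervalIntegral.integral_add (Continuous.intervalIntegrable (by fun_prop) _ _)
    (Continuous.intervalIntegrable (by fun_prop) _ _), intervalIntegral.integral_const_mul,
    intervalIntegral.integral_ofReal, intervalIntegral.integral_ofReal] at hint
  have hre := congrArg Complex.re hint
  have him := congrArg Complex.im hint
  simp only [Complex.add_re, Complex.add_im, Complex.mul_re, Complex.mul_im, Complex.I_re,
    Complex.I_im, Complex.ofReal_re, Complex.ofReal_im, Complex.zero_re, Complex.zero_im, zero_mul,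
    mul_zero, one_mul, sub_self, add_zero, zero_add] at hre him
  exact ⟨by rw [circleMean, hre, zero_div], by rw [circleMean, him, zero_div]⟩

namespace IsPCSF

variable {p : ℕ} {T : ℝ} {k : ℝ → ℝ → ℝ} {ψ : ℝ → ℝ} {t : ℝ}

lemma pos (h : IsPCSF p T k ψ) (ht : t ∈ Ico 0 T) (θ : ℝ) : 0 < k θ t := h.2.2.1 θ t ht

lemma periodic_pow (h : IsPCSF p T k ψ) (j : ℕ) (t : ℝ) :
    Function.Periodic (fun θ => k θ t ^ j) (2 * π) := fun θ => by
  simp only [h.2.1]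

lemma contDiffOn_inv (h : IsPCSF p T k ψ) :
    ContDiffOn ℝ (⊤ : ℕ∞) (fun q : ℝ × ℝ => (k q.1 q.2)⁻¹) (univ ×ˢ Ico 0 T) :=
  h.1.inv fun q hq => (h.pos hq.2 q.1).ne'

lemma contDiffOn_inv_Ioo (h : IsPCSF p T k ψ) :
    ContDiffOn ℝ 1 (fun q : ℝ × ℝ => (k q.1 q.2)⁻¹) (univ ×ˢ Ioo 0 T) :=
  (h.contDiffOn_inv.mono (prod_mono le_rfl Ioo_subset_Ico_self)).of_le (ENat.LEInfty.out)

lemma contDiffOn_pow (h : IsPCSF p T k ψ) :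
    ContDiffOn ℝ 2 (fun q : ℝ × ℝ => k q.1 q.2 ^ p) (univ ×ˢ Ioo 0 T) :=
  ((h.1.pow p).mono (prod_mono le_rfl Ioo_subset_Ico_self)).of_le (ENat.LEInfty.out)

lemma contDiff_slice (h : IsPCSF p T k ψ) (ht : t ∈ Ico 0 T) :
    ContDiff ℝ (⊤ : ℕ∞) fun θ => k θ t := _root_.contDiff_slice h.1 ht

lemma continuous_slice (h : IsPCSF p T k ψ) (ht : t ∈ Ico 0 T) : Continuous fun θ => k θ t :=
  (h.contDiff_slice ht).continuous

lemma continuous_inv_slice (h : IsPCSF p T k ψ) (ht : t ∈ Ico 0 T) :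
    Continuous fun θ => (k θ t)⁻¹ :=
  (h.continuous_slice ht).inv₀ fun θ => (h.pos ht θ).ne'

lemma contDiff_deriv_pow_slice (h : IsPCSF p T k ψ) (ht : t ∈ Ico 0 T) :
    ContDiff ℝ (⊤ : ℕ∞) (deriv fun θ => k θ t ^ p) :=
  (contDiff_infty_iff_deriv.1 ((h.contDiff_slice ht).pow p)).2

lemma contDiff_speedSource (h : IsPCSF p T k ψ) (ht : t ∈ Ico 0 T) :
    ContDiff ℝ (⊤ : ℕ∞) fun θ => speedSource p k θ t :=
  (contDiff_infty_iff_deriv.1 (h.contDiff_deriv_pow_slice ht)).2.add ((h.contDiff_slice ht).pow p)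

lemma hasDerivAt_pow_slice (h : IsPCSF p T k ψ) (ht : t ∈ Ico 0 T) (θ : ℝ) :
    HasDerivAt (fun x => k x t ^ p) (deriv (fun x => k x t ^ p) θ) θ :=
  (((h.contDiff_slice ht).pow p).differentiable (by simp) θ).hasDerivAt

lemma hasDerivAt_deriv_pow_slice (h : IsPCSF p T k ψ) (ht : t ∈ Ico 0 T) (θ : ℝ) :
    HasDerivAt (deriv fun x => k x t ^ p) (speedSource p k θ t - k θ t ^ p) θ := by
  rw [speedSource, add_sub_cancel_right]
  exact ((h.contDiff_deriv_pow_slice ht).differentiable (by simp) θ).hasDerivAt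

lemma periodic_pow_mul_speedSource (h : IsPCSF p T k ψ) (t : ℝ) :
    Function.Periodic (fun θ => k θ t ^ (p + 1) * speedSource p k θ t) (2 * π) := by
  intro θ
  simp only [speedSource, h.periodic_pow (p + 1) t θ, h.periodic_pow p t θ,
    periodic_deriv (periodic_deriv (h.periodic_pow p t)) θ]

lemma isClosing_inv (h : IsPCSF p T k ψ) (ht : t ∈ Ico 0 T) : IsClosing fun θ => (k θ t)⁻¹ :=
  isClosing_inv_of_integral_eq_zero (h.continuous_slice ht) (h.pos ht)
    (h.2.2.2.2.2.2.2.2.2 t ht)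

lemma meanRadius_pos (h : IsPCSF p T k ψ) (ht : t ∈ Ico 0 T) : 0 < meanRadius k t :=
  circleMean_pos (h.continuous_inv_slice ht) fun θ => inv_pos.2 (h.pos ht θ)

lemma continuousOn_meanRadius (h : IsPCSF p T k ψ) : ContinuousOn (meanRadius k) (Ico 0 T) :=
  continuousOn_circleMean h.contDiffOn_inv.continuousOn

/-! ### Evolution equations -/

lemma hasDerivAt_curvature (h : IsPCSF p T k ψ) (hp : p ≠ 0) (ht : t ∈ Ico 0 T) (θ : ℝ) :
    HasDerivAt (k θ) (1 / p * k θ t ^ 2 * speedSource p k θ t) t := by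
  refine (h.2.2.2.1 θ t ht).congr_deriv ?_
  rw [speedSource, deriv_deriv_pow ((h.contDiff_slice ht).of_le (ENat.LEInfty.out))]
  field_simp

lemma hasDerivAt_inv (h : IsPCSF p T k ψ) (hp : p ≠ 0) (ht : t ∈ Ico 0 T) (θ : ℝ) :
    HasDerivAt (fun s => (k θ s)⁻¹) (-(1 / p) * speedSource p k θ t) t := by
  have hk := (h.pos ht θ).ne'
  refine ((h.hasDerivAt_curvature hp ht θ).fun_inv hk).congr_deriv ?_
  field_simp

lemma hasDerivAt_pow (h : IsPCSF p T k ψ) (hp : p ≠ 0) (ht : t ∈ Ico 0 T) (θ : ℝ) :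
    HasDerivAt (fun s => k θ s ^ p) (k θ t ^ (p + 1) * speedSource p k θ t) t := by
  refine ((h.hasDerivAt_curvature hp ht θ).fun_pow p).congr_deriv ?_
  obtain ⟨m, rfl⟩ := Nat.exists_eq_add_one_of_ne_zero hp
  rw [Nat.add_sub_cancel]
  field_simp
  ring

lemma circleMean_mul_speedSource (h : IsPCSF p T k ψ) (ht : t ∈ Ico 0 T) {g g' u : ℝ → ℝ}
    (hg : ∀ x, HasDerivAt g (g' x) x) (hg' : ∀ x, HasDerivAt g' (u x - g x) x)
    (hu : Continuous u) (hper : g 0 = g (2 * π)) (hper' : g' 0 = g' (2 * π)) :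
    circleMean (fun x => g x * speedSource p k x t) = circleMean fun x => u x * k x t ^ p :=
  circleMean_mul_eq_of_hasDerivAt_sub hg hg' (h.hasDerivAt_pow_slice ht)
    (h.hasDerivAt_deriv_pow_slice ht) hu (h.contDiff_speedSource ht).continuous hper hper'
    (by simpa using (h.periodic_pow p t 0).symm)
    (by simpa using (periodic_deriv (h.periodic_pow p t) 0).symm)

lemma hasDerivAt_meanRadius (h : IsPCSF p T k ψ) (hp : p ≠ 0) (ht : t ∈ Ioo 0 T) :
    HasDerivAt (meanRadius k) (-(1 / p) * circleMean fun θ => k θ t ^ p) t := by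
  have ht' := Ioo_subset_Ico_self ht
  have hsource := (h.contDiff_speedSource ht').continuous
  refine (hasDerivAt_circleMean (W := fun θ s => (k θ s)⁻¹)
    (W' := fun θ => -(1 / p) * speedSource p k θ t) isOpen_Ioo h.contDiffOn_inv_Ioo ht
    (by fun_prop) (h.hasDerivAt_inv hp ht')).congr_deriv ?_
  have hmean := h.circleMean_mul_speedSource ht' (g := fun _ => 1) (g' := fun _ => 0)
    (u := fun _ => 1) (fun x => hasDerivAt_const x 1)
    (fun x => by simpa using hasDerivAt_const x (0 : ℝ)) continuous_const rfl rfl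
  simp only [one_mul] at hmean
  rw [circleMean_const_mul, hmean]

lemma hasDerivAt_normalizedArea (h : IsPCSF p T k ψ) (hp : p ≠ 0) (ht : t ∈ Ioo 0 T) :
    HasDerivAt (fun s => normalizedArea fun θ => (k θ s)⁻¹)
      (-(2 / p) * circleMean fun θ => k θ t ^ (p - 1)) t := by
  have ht' := Ioo_subset_Ico_self ht
  have hinv := h.continuous_inv_slice ht'
  have hsource := (h.contDiff_speedSource ht').continuous
  refine (_root_.hasDerivAt_normalizedArea (W := fun θ s => (k θ s)⁻¹)
    (W' := fun θ => -(1 / p) * speedSource p k θ t) isOpen_Ioo h.contDiffOn_inv_Ioo ht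
    (fun s hs => h.isClosing_inv (Ioo_subset_Ico_self hs)) (by fun_prop)
    (h.hasDerivAt_inv hp ht')).congr_deriv ?_
  have hmean := h.circleMean_mul_speedSource ht' (hasDerivAt_supportFun hinv)
    (hasDerivAt_supportFunDeriv hinv) hinv (supportFun_zero_eq_two_pi (h.isClosing_inv ht'))
    (supportFunDeriv_zero_eq_two_pi (h.isClosing_inv ht'))
  have hpow : ∀ θ, (k θ t)⁻¹ * k θ t ^ p = k θ t ^ (p - 1) := fun θ => by
    rw [← pow_sub_one_mul hp (k θ t), mul_comm (_ ^ _), inv_mul_cancel_left₀ (h.pos ht' θ).ne']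
  simp_rw [mul_left_comm (supportFun _ _), circleMean_const_mul, hmean, hpow]
  ring

lemma hasDerivAt_deriv_pow (h : IsPCSF p T k ψ) (hp : p ≠ 0) (ht : t ∈ Ioo 0 T) (θ : ℝ) :
    HasDerivAt (fun s => deriv (fun x => k x s ^ p) θ)
      (deriv (fun x => k x t ^ (p + 1) * speedSource p k x t) θ) t := by
  have hcomm := hasDerivAt_deriv_comm (W := fun x s => k x s ^ p) isOpen_Ioo h.contDiffOn_pow ht θ
  have htime : (fun x => deriv (fun s => k x s ^ p) t) =
      fun x => k x t ^ (p + 1) * speedSource p k x t :=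
    funext fun x => (h.hasDerivAt_pow hp (Ioo_subset_Ico_self ht) x).deriv
  rwa [htime] at hcomm

lemma hasDerivAt_speedEnergy (h : IsPCSF p T k ψ) (hp : p ≠ 0) (ht : t ∈ Ioo 0 T) :
    HasDerivAt (speedEnergy p k)
      (2 * circleMean fun θ => k θ t ^ (p + 1) * speedSource p k θ t ^ 2) t := by
  have ht' := Ioo_subset_Ico_self ht
  have hk := h.continuous_slice ht'
  have hV' := (h.contDiff_deriv_pow_slice ht').continuous
  have hsource := (h.contDiff_speedSource ht').continuous
  have hG : ContDiff ℝ (⊤ : ℕ∞) fun x => k x t ^ (p + 1) * speedSource p k x t :=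
    ((h.contDiff_slice ht').pow _).mul (h.contDiff_speedSource ht')
  set G := fun x => k x t ^ (p + 1) * speedSource p k x t with hGdef
  have hG' : Continuous (deriv G) := hG.continuous_deriv (by simp)
  have hjoint : ContDiffOn ℝ 1 (fun q : ℝ × ℝ => (k q.1 q.2 ^ p) ^ 2 -
      deriv (fun x => k x q.2 ^ p) q.1 ^ 2) (univ ×ˢ Ioo 0 T) :=
    ((h.contDiffOn_pow.of_le one_le_two).pow 2).sub
      ((contDiffOn_deriv_fst (W := fun x s => k x s ^ p) isOpen_Ioo h.contDiffOn_pow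
        one_add_one_eq_two.le).pow 2)
  refine (hasDerivAt_circleMean
    (W := fun x s => (k x s ^ p) ^ 2 - deriv (fun y => k y s ^ p) x ^ 2)
    (W' := fun x => 2 * (k x t ^ p * G x) - 2 * (deriv (fun y => k y t ^ p) x * deriv G x))
    isOpen_Ioo hjoint ht (by fun_prop) fun x => ?_).congr_deriv ?_
  · refine (((h.hasDerivAt_pow hp ht' x).fun_pow 2).fun_sub
      ((h.hasDerivAt_deriv_pow hp ht x).fun_pow 2)).congr_deriv ?_
    simp only [hGdef]
    ring
  · have hparts := circleMean_mul_deriv (h.hasDerivAt_deriv_pow_slice ht')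
      (fun x => (hG.differentiable (by simp) x).hasDerivAt) (by fun_prop) hG'
      (by simpa using (periodic_deriv (h.periodic_pow p t) 0).symm)
      (by simpa using (h.periodic_pow_mul_speedSource t 0).symm)
    have hexp : ∀ x, k x t ^ (p + 1) * speedSource p k x t ^ 2 =
        k x t ^ p * G x + (speedSource p k x t - k x t ^ p) * G x := fun x => by
      simp only [hGdef]
      ring
    simp_rw [hexp]
    simp (disch := fun_prop) only [circleMean_sub, circleMean_add, circleMean_const_mul, hparts]
    ring

lemma monotoneOn_speedEnergy (h : IsPCSF p T k ψ) (hp : p ≠ 0) :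
    MonotoneOn (speedEnergy p k) (Ioo 0 T) := by
  have hd := fun t ht => h.hasDerivAt_speedEnergy (t := t) hp ht
  refine monotoneOn_of_hasDerivWithinAt_nonneg (convex_Ioo _ _)
    (fun t ht => (hd t ht).continuousAt.continuousWithinAt)
    (fun t ht => (hd t (interior_subset ht)).hasDerivWithinAt) fun t ht => ?_
  have hk := h.pos (Ioo_subset_Ico_self (interior_subset ht))
  exact mul_nonneg two_pos.le (circleMean_nonneg fun θ => by have := hk θ; positivity)

lemma antitoneOn_meanRadius (h : IsPCSF p T k ψ) (hp : p ≠ 0) :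
    AntitoneOn (meanRadius k) (Ico 0 T) := by
  refine antitoneOn_of_hasDerivWithinAt_nonpos (convex_Ico _ _) h.continuousOn_meanRadius
    (fun t ht => (h.hasDerivAt_meanRadius hp (interior_Ico.subset ht)).hasDerivWithinAt)
    fun t ht => ?_
  have hk := h.pos (interior_subset ht)
  have hmean := circleMean_nonneg fun θ => (pow_pos (hk θ) p).le
  rw [neg_mul, neg_nonpos]
  positivity

end IsPCSF

namespace IsPCSF

variable {p : ℕ} {T : ℝ} {k : ℝ → ℝ → ℝ} {ψ : ℝ → ℝ} {t : ℝ}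

/-! ### Preservation of roundness -/

lemma meanRadius_mul_circleMean_pow_le (h : IsPCSF p T k ψ) (hp : p ≠ 0) (ht : t ∈ Ico 0 T)
    (hE : 1200 * isoDeficit (fun θ => (k θ t)⁻¹) ≤ meanRadius k t ^ 2) :
    meanRadius k t * circleMean (fun θ => k θ t ^ (p - 1)) ≤
      normalizedArea (fun θ => (k θ t)⁻¹) * circleMean fun θ => k θ t ^ p := by
  have hgage := circleMean_le_normalizedArea_mul (h.continuous_inv_slice ht)
    (fun θ => inv_pos.2 (h.pos ht θ)) (h.isClosing_inv ht) hE
  simp only [inv_inv] at hgage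
  have hchebyshev := circleMean_mul_circleMean_pow_le (h.continuous_slice ht) (h.pos ht) (p - 1)
  rw [Nat.sub_add_cancel (Nat.one_le_iff_ne_zero.2 hp)] at hchebyshev
  have harea : 0 ≤ normalizedArea fun θ => (k θ t)⁻¹ := by
    rw [isoDeficit, ← meanRadius] at hE
    nlinarith [sq_nonneg (meanRadius k t)]
  have hpow : 0 ≤ circleMean fun θ => k θ t ^ (p - 1) :=
    circleMean_nonneg fun θ => (pow_pos (h.pos ht θ) _).le
  calc meanRadius k t * circleMean (fun θ => k θ t ^ (p - 1))
      ≤ normalizedArea (fun θ => (k θ t)⁻¹) * circleMean (fun θ => k θ t) *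
          circleMean (fun θ => k θ t ^ (p - 1)) := mul_le_mul_of_nonneg_right hgage hpow
    _ ≤ normalizedArea (fun θ => (k θ t)⁻¹) * circleMean fun θ => k θ t ^ p := by
      rw [mul_assoc]
      exact mul_le_mul_of_nonneg_left hchebyshev harea

lemma hasDerivAt_normalizedArea_div_sq (h : IsPCSF p T k ψ) (hp : p ≠ 0) (ht : t ∈ Ioo 0 T) :
    HasDerivAt (fun s => normalizedArea (fun θ => (k θ s)⁻¹) / meanRadius k s ^ 2)
      (2 / (p * meanRadius k t ^ 3) *
        (normalizedArea (fun θ => (k θ t)⁻¹) * circleMean (fun θ => k θ t ^ p) -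
          meanRadius k t * circleMean fun θ => k θ t ^ (p - 1))) t := by
  have hR := (h.meanRadius_pos (Ioo_subset_Ico_self ht)).ne'
  refine ((h.hasDerivAt_normalizedArea hp ht).fun_div
    ((h.hasDerivAt_meanRadius hp ht).fun_pow 2) (pow_ne_zero 2 hR)).congr_deriv ?_
  field_simp
  ring

lemma isoDeficit_inv_le (h : IsPCSF p T k ψ) (hp : p ≠ 0) (ht : t ∈ Ico 0 T)
    (h0 : 2 * 10 ^ 12 * isoDeficit (fun θ => (k θ 0)⁻¹) ≤ meanRadius k 0 ^ 2) :
    10 ^ 12 * isoDeficit (fun θ => (k θ t)⁻¹) ≤ meanRadius k t ^ 2 := by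
  have hsq : ∀ s ∈ Ico 0 T, 0 < meanRadius k s ^ 2 := fun s hs => pow_pos (h.meanRadius_pos hs) 2
  have hdeficit : ∀ s, isoDeficit (fun θ => (k θ s)⁻¹) =
      meanRadius k s ^ 2 - normalizedArea fun θ => (k θ s)⁻¹ := fun s => rfl
  have hratio := forall_lt_of_hasDerivAt_nonneg (c := 1 - 1 / 10 ^ 12)
    (f := fun s => normalizedArea (fun θ => (k θ s)⁻¹) / meanRadius k s ^ 2)
    ((continuousOn_normalizedArea h.contDiffOn_inv.continuousOn).div
      (h.continuousOn_meanRadius.pow 2) fun s hs => (hsq s hs).ne') ?_ (fun s hs hlt => ?_) t ht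
  · rw [lt_div_iff₀ (hsq t ht)] at hratio
    rw [hdeficit]
    linarith
  · have h0T : (0 : ℝ) ∈ Ico 0 T := ⟨le_rfl, ht.1.trans_lt ht.2⟩
    rw [lt_div_iff₀ (hsq 0 h0T)]
    rw [hdeficit] at h0
    linarith [hsq 0 h0T]
  · have hs' := Ioo_subset_Ico_self hs
    have hR := h.meanRadius_pos hs'
    rw [lt_div_iff₀ (hsq s hs')] at hlt
    have hle := h.meanRadius_mul_circleMean_pow_le hp hs' (by rw [hdeficit]; linarith [hsq s hs'])
    exact ⟨_, mul_nonneg (by positivity) (sub_nonneg.2 hle),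
      h.hasDerivAt_normalizedArea_div_sq hp hs⟩

/-! ### Curvature bound and blow-up rate -/

lemma circleMean_sq_deriv_pow_le (h : IsPCSF p T k ψ) (hp : p ≠ 0) {a x₀ : ℝ} (ha : a ∈ Ioo 0 T)
    (hat : a ≤ t) (ht : t ∈ Ico 0 T) (hmax : IsMaxOn (fun x => k x t) (Icc 0 (2 * π)) x₀)
    (hlarge : 4 * -speedEnergy p k a ≤ (k x₀ t ^ p) ^ 2) :
    circleMean (fun x => deriv (fun y => k y t ^ p) x ^ 2) ≤ 5 / 4 * (k x₀ t ^ p) ^ 2 := by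
  have hk := h.continuous_slice ht
  have hV' := (h.contDiff_deriv_pow_slice ht).continuous
  have hmono := h.monotoneOn_speedEnergy hp ha ⟨ha.1.trans_le hat, ht.2⟩ hat
  have henergy : speedEnergy p k t = circleMean (fun x => (k x t ^ p) ^ 2) -
      circleMean fun x => deriv (fun y => k y t ^ p) x ^ 2 :=
    circleMean_sub (by fun_prop) (by fun_prop)
  have hsup : circleMean (fun x => (k x t ^ p) ^ 2) ≤ (k x₀ t ^ p) ^ 2 :=
    circleMean_le_of_le (by fun_prop) fun x hx => by
      have hpos := h.pos ht x
      gcongr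
      exact hmax hx
  linarith

lemma exists_mul_meanRadius_le_of_le (h : IsPCSF p T k ψ) (hp : p ≠ 0)
    (hE : ∀ t ∈ Ico 0 T, 10 ^ 12 * isoDeficit (fun θ => (k θ t)⁻¹) ≤ meanRadius k t ^ 2)
    {a : ℝ} (ha : a ∈ Ioo 0 T) :
    ∃ C, ∀ t ∈ Ico a T, ∀ x ∈ Icc 0 (2 * π), k x t * meanRadius k t ≤ C := by
  set D := 4 * -speedEnergy p k a
  refine ⟨max 4 ((1 + |D|) * meanRadius k a), fun t ht x hx => ?_⟩
  have ht' : t ∈ Ico 0 T := ⟨ha.1.le.trans ht.1, ht.2⟩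
  obtain ⟨x₀, hx₀, hmax⟩ := isCompact_Icc.exists_isMaxOn ⟨x, hx⟩
    (h.continuous_slice ht').continuousOn
  have hR := h.meanRadius_pos ht'
  have hk₀ := h.pos ht' x₀
  refine (mul_le_mul_of_nonneg_right (hmax hx) hR.le).trans ?_
  rcases le_or_gt D ((k x₀ t ^ p) ^ 2) with hlarge | hsmall
  · refine le_max_of_le_left ?_
    have hRle := circleMean_le_four_mul hp (h.continuous_inv_slice ht')
      (fun θ => inv_pos.2 (h.pos ht' θ)) (h.isClosing_inv ht') (hE t ht')
      (by simpa only [inv_inv] using h.hasDerivAt_pow_slice ht')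
      (h.contDiff_deriv_pow_slice ht').continuous hx₀
      (by simpa only [inv_inv] using h.circleMean_sq_deriv_pow_le hp ha ht.1 ht' hmax hlarge)
    rwa [← meanRadius, ← div_eq_mul_inv, le_div_iff₀' hk₀] at hRle
  · refine le_max_of_le_right ?_
    have hk_le : k x₀ t ≤ 1 + |D| := by
      rcases le_total (k x₀ t) 1 with hle | hge
      · linarith [abs_nonneg D]
      · have hpow := le_self_pow₀ hge (mul_ne_zero hp two_ne_zero)
        rw [pow_mul] at hpow
        linarith [le_abs_self D]
    exact mul_le_mul hk_le (h.antitoneOn_meanRadius hp (Ioo_subset_Ico_self ha) ht' ht.1) hR.le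
      (by positivity)

lemma exists_mul_meanRadius_le (h : IsPCSF p T k ψ) (hp : p ≠ 0) (hT : 0 < T)
    (hE : ∀ t ∈ Ico 0 T, 10 ^ 12 * isoDeficit (fun θ => (k θ t)⁻¹) ≤ meanRadius k t ^ 2) :
    ∃ C, ∀ t ∈ Ico 0 T, ∀ x ∈ Icc 0 (2 * π), k x t * meanRadius k t ≤ C := by
  obtain ⟨C₁, hC₁⟩ := h.exists_mul_meanRadius_le_of_le hp hE (a := T / 2) ⟨by linarith, by linarith⟩
  have hsub : Icc 0 (T / 2) ⊆ Ico 0 T := fun t ht => ⟨ht.1, by linarith [ht.2]⟩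
  have hcont : ContinuousOn (fun q : ℝ × ℝ => k q.1 q.2 * meanRadius k q.2)
      (Icc 0 (2 * π) ×ˢ Icc 0 (T / 2)) :=
    (h.1.continuousOn.mono (prod_mono (subset_univ _) hsub)).mul
      (h.continuousOn_meanRadius.comp continuousOn_snd fun q hq => hsub hq.2)
  obtain ⟨C₂, hC₂⟩ := (isCompact_Icc.prod isCompact_Icc).bddAbove_image hcont
  refine ⟨max C₁ C₂, fun t ht x hx => ?_⟩
  rcases le_total t (T / 2) with hle | hge
  · exact le_max_of_le_right (hC₂ ⟨(x, t), ⟨hx, ht.1, hle⟩, rfl⟩)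
  · exact le_max_of_le_left (hC₁ t ⟨hge, ht.2⟩ x hx)

lemma tendsto_meanRadius (h : IsPCSF p T k ψ) (hT : 0 < T) {C : ℝ}
    (hC : ∀ t ∈ Ico 0 T, ∀ x ∈ Icc 0 (2 * π), k x t * meanRadius k t ≤ C) :
    Tendsto (meanRadius k) (nhdsWithin T (Iio T)) (nhds 0) := by
  have hblow := h.2.2.2.2.2.2.2.2.1
  have hmem : ∀ᶠ t in nhdsWithin T (Iio T), t ∈ Ico 0 T := Ico_mem_nhdsLT hT
  refine tendsto_of_tendsto_of_tendsto_of_le_of_le' tendsto_const_nhds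
    (tendsto_const_nhds.div_atTop hblow (a := C)) ?_ ?_
  · filter_upwards [hmem] with t ht using (h.meanRadius_pos ht).le
  · filter_upwards [hmem, hblow.eventually_gt_atTop 0] with t ht hpos
    have : Nonempty (Icc 0 (2 * π)) := ⟨⟨0, le_rfl, two_pi_pos.le⟩⟩
    have hR := h.meanRadius_pos ht
    rw [le_div_comm₀ hR hpos]
    exact ciSup_le fun x => (le_div_iff₀ hR).2 (hC t ht x x.2)

lemma one_le_meanRadius_mul_circleMean (h : IsPCSF p T k ψ) (ht : t ∈ Ico 0 T) :
    1 ≤ meanRadius k t * circleMean fun θ => k θ t := by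
  rw [mul_comm]
  exact one_le_circleMean_mul_circleMean_inv (h.continuous_slice ht) (h.pos ht)

lemma one_le_meanRadius_pow_mul (h : IsPCSF p T k ψ) (ht : t ∈ Ico 0 T) (j : ℕ) :
    1 ≤ meanRadius k t ^ j * circleMean fun θ => k θ t ^ j := by
  have hR := h.meanRadius_pos ht
  calc (1 : ℝ) ≤ (meanRadius k t * circleMean fun θ => k θ t) ^ j :=
        one_le_pow₀ (h.one_le_meanRadius_mul_circleMean ht)
    _ ≤ meanRadius k t ^ j * circleMean fun θ => k θ t ^ j := by
        rw [mul_pow]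
        gcongr
        exact circleMean_pow_le (h.continuous_slice ht) (h.pos ht) j

lemma meanRadius_pow_mul_le (h : IsPCSF p T k ψ) (ht : t ∈ Ico 0 T) (j : ℕ) {C : ℝ}
    (hC : ∀ x ∈ Icc 0 (2 * π), k x t * meanRadius k t ≤ C) :
    meanRadius k t ^ j * circleMean (fun θ => k θ t ^ j) ≤ C ^ j := by
  have hk := h.continuous_slice ht
  rw [← circleMean_const_mul]
  refine circleMean_le_of_le (by fun_prop) fun x hx => ?_
  rw [← mul_pow, mul_comm]
  exact pow_le_pow_left₀ (mul_pos (h.pos ht x) (h.meanRadius_pos ht)).le (hC x hx) j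

lemma hasDerivAt_meanRadius_pow (h : IsPCSF p T k ψ) (hp : p ≠ 0) (ht : t ∈ Ioo 0 T) :
    HasDerivAt (fun s => meanRadius k s ^ (p + 1))
      (-((p + 1) / p * (meanRadius k t ^ p * circleMean fun θ => k θ t ^ p))) t := by
  refine ((h.hasDerivAt_meanRadius hp ht).fun_pow (p + 1)).congr_deriv ?_
  rw [Nat.add_sub_cancel]
  push_cast
  ring

lemma meanRadius_pow_mem_Icc (h : IsPCSF p T k ψ) (hp : p ≠ 0) (ht : t ∈ Ico 0 T) {C : ℝ}
    (hC : ∀ t ∈ Ico 0 T, ∀ x ∈ Icc 0 (2 * π), k x t * meanRadius k t ≤ C) :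
    meanRadius k t ^ (p + 1) ∈ Icc ((p + 1) / p * (T - t)) ((p + 1) / p * C ^ p * (T - t)) := by
  have hfactor : (0 : ℝ) ≤ (p + 1) / p := by positivity
  have hcont : ContinuousOn (fun s => meanRadius k s ^ (p + 1)) (Ico 0 T) :=
    h.continuousOn_meanRadius.pow (p + 1)
  have hlim : Tendsto (fun s => meanRadius k s ^ (p + 1)) (nhdsWithin T (Iio T)) (nhds 0) := by
    simpa using (h.tendsto_meanRadius (ht.1.trans_lt ht.2) hC).pow (p + 1)
  have hd := fun s hs => h.hasDerivAt_meanRadius_pow (t := s) hp hs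
  constructor
  · refine mul_sub_le_of_hasDerivAt_le_neg hcont hd (fun s hs => ?_) hlim ht
    exact neg_le_neg (le_mul_of_one_le_right hfactor
      (h.one_le_meanRadius_pow_mul (Ioo_subset_Ico_self hs) p))
  · have hneg := mul_sub_le_of_hasDerivAt_le_neg (A := -((p + 1) / p * C ^ p)) hcont.fun_neg
      (fun s hs => (hd s hs).fun_neg) (fun s hs => ?_) (by simpa using hlim.neg) ht
    · linarith
    · have hs' := Ioo_subset_Ico_self hs
      rw [neg_neg, neg_neg]
      exact mul_le_mul_of_nonneg_left (h.meanRadius_pow_mul_le hs' p (hC s hs')) hfactor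

lemma exists_blowup_rate (h : IsPCSF p T k ψ) (hp : p ≠ 0) (hT : 0 < T)
    (h0 : 2 * 10 ^ 12 * isoDeficit (fun θ => (k θ 0)⁻¹) ≤ meanRadius k 0 ^ 2) :
    ∃ c > 0, ∃ c' > 0, ∀ t ∈ Ico 0 T, c / (T - t) ≤ circleMean (fun θ => k θ t) ^ (p + 1) ∧
      circleMean (fun θ => k θ t) ^ (p + 1) ≤ c' / (T - t) := by
  obtain ⟨C, hC⟩ := h.exists_mul_meanRadius_le hp hT fun t ht => h.isoDeficit_inv_le hp ht h0
  have hone : ∀ t ∈ Ico 0 T, 1 ≤ (meanRadius k t * circleMean fun θ => k θ t) ∧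
      (meanRadius k t * circleMean fun θ => k θ t) ≤ C := fun t ht =>
    ⟨h.one_le_meanRadius_mul_circleMean ht,
      by simpa using h.meanRadius_pow_mul_le ht 1 (hC t ht)⟩
  have hCpos : 0 < C := by
    obtain ⟨h1, hle⟩ := hone 0 ⟨le_rfl, hT⟩
    linarith
  refine ⟨1 / ((p + 1) / p * C ^ p), by positivity, C ^ (p + 1) / ((p + 1) / p), by positivity,
    fun t ht => ?_⟩
  obtain ⟨h1, hle⟩ := hone t ht
  obtain ⟨hlower, hupper⟩ := h.meanRadius_pow_mem_Icc hp ht hC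
  have hTt := sub_pos.2 ht.2
  have hK : 0 < circleMean fun θ => k θ t := circleMean_pos (h.continuous_slice ht) (h.pos ht)
  have hpow_ge := one_le_pow₀ h1 (n := p + 1)
  have hpow_le := pow_le_pow_left₀ (zero_le_one.trans h1) hle (p + 1)
  rw [mul_pow] at hpow_ge hpow_le
  rw [div_div, div_div, div_le_iff₀' (by positivity), le_div_iff₀' (by positivity)]
  exact ⟨hpow_ge.trans (by gcongr), le_trans (by gcongr) hpow_le⟩

end IsPCSF

/-- **Blow-up Lemma.** There is `c_p > 0` depending only on `p` such that if
`ψ̂(0) ≥ c_p ‖ψ‖₂`, then there are `c, c' > 0` with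
`c/(T-t) ≤ k̂(0,t)^{p+1} ≤ c'/(T-t)` for all `t ∈ [0,T)`. -/
theorem statement7 (p : ℕ) (hp : 1 ≤ p) :
    ∃ cp > (0:ℝ), ∀ (T : ℝ), 0 < T → ∀ (k : ℝ → ℝ → ℝ) (ψ : ℝ → ℝ),
      IsPCSF p T k ψ →
      cp * seminorm2 ψ ≤ (fCoeff ψ 0).re →
      ∃ c > (0:ℝ), ∃ c' > (0:ℝ), ∀ t : ℝ, 0 ≤ t → t < T →
        c / (T - t) ≤ ((fCoeff (fun θ => k θ t) 0).re) ^ (p + 1) ∧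
        ((fCoeff (fun θ => k θ t) 0).re) ^ (p + 1) ≤ c' / (T - t) := by
  refine ⟨2 * 10 ^ 7 * (∑' n : ℤ, 1 / (n : ℝ) ^ 2) + 1, by positivity, fun T hT k ψ h hψ => ?_⟩
  have hslice : (fun θ => k θ 0) = ψ := funext h.2.2.2.2.1
  have h0T : (0 : ℝ) ∈ Ico 0 T := ⟨le_rfl, hT⟩
  have hround : 2 * 10 ^ 12 * isoDeficit (fun θ => (k θ 0)⁻¹) ≤ meanRadius k 0 ^ 2 := by
    refine isoDeficit_inv_le_of_seminorm2_le ((h.contDiff_slice h0T).of_le ENat.LEInfty.out)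
      (h.pos h0T) (fun θ => h.2.1 θ 0) (h.isClosing_inv h0T) ?_
    rwa [hslice, ← Complex.ofReal_re (circleMean ψ), ← fCoeff_zero h.2.2.2.2.2.1.continuous]
  obtain ⟨c, hc, c', hc', hrate⟩ := h.exists_blowup_rate (Nat.one_le_iff_ne_zero.1 hp) hT hround
  refine ⟨c, hc, c', hc', fun t ht0 htT => ?_⟩
  rw [fCoeff_zero (h.continuous_slice ⟨ht0, htT⟩), Complex.ofReal_re]
  exact hrate t ⟨ht0, htT⟩
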